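/- For every integer n ≥ 1, over PA⁻ + IΣn the statement fairFRT^1_2(Σ_{n+1}) is strictly weaker than each of fairFRT^1(Σ_{n+1}), FRT^1_2(Σ_{n+1}) and GPHP(Σ_{n+1}): each of the latter three implies fairFRT^1_2(Σ_{n+1}) over PA⁻ + IΣn, but PA⁻ + IΣn + fairFRT^1_2(Σ_{n+1}) proves none of the three (indeed PA⁻ + IΣn proves fairFRT^1_2(Σ_{n+1}) while not proving any of the three). -/

import Mathlib

/- Shared development: first-order arithmetic in the language {0,1,+,·,<},
   the arithmetic hierarchy, fragments of arithmetic, and coded finite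
   combinatorics inside models. -/

open FirstOrder Language

namespace ArithFC

/-- Function symbols of the language of arithmetic: 0, 1, +, ·. -/
inductive Func : ℕ → Type
  | zero : Func 0
  | one : Func 0
  | add : Func 2
  | mul : Func 2

/-- Relation symbols of the language of arithmetic: <. -/
inductive Rel : ℕ → Type
  | lt : Rel 2

/-- The first-order language {0, 1, +, ·, <}. -/
def lang : Language :=
  { Functions := Func, Relations := Rel }

section Instances

variable (M : Type) [lang.Structure M]

instance : Zero M := ⟨Structure.funMap (L := lang) Func.zero ![]⟩
instance : One M := ⟨Structure.funMap (L := lang) Func.one ![]⟩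
instance : Add M := ⟨fun x y => Structure.funMap (L := lang) Func.add ![x, y]⟩
instance : Mul M := ⟨fun x y => Structure.funMap (L := lang) Func.mul ![x, y]⟩
instance : LT M := ⟨fun x y => Structure.RelMap (L := lang) Rel.lt ![x, y]⟩
instance : LE M := ⟨fun x y => x < y ∨ x = y⟩

end Instances

/-- The numeral `n` in a model. -/
def numM (M : Type) [lang.Structure M] : ℕ → M
  | 0 => 0
  | n + 1 => numM M n + 1

/-- `b` is nonstandard (greater than every numeral). -/
def Nonstd {M : Type} [lang.Structure M] (b : M) : Prop := ∀ n : ℕ, numM M n < b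

/-- The atomic formula `t < u`. -/
def ltFm {α : Type} {n : ℕ} (t u : lang.Term (α ⊕ Fin n)) : lang.BoundedFormula α n :=
  BoundedFormula.rel (Rel.lt : lang.Relations 2) ![t, u]

/-- Δ₀ formulas: built from atomic formulas by boolean connectives and
bounded universal quantification (this generates, up to logical equivalence,
the usual class of bounded formulas). -/
inductive IsDelta0 {α : Type} : ∀ n : ℕ, lang.BoundedFormula α n → Prop
  | falsum (n : ℕ) : IsDelta0 n BoundedFormula.falsum
  | equal (n : ℕ) (t u : lang.Term (α ⊕ Fin n)) : IsDelta0 n (BoundedFormula.equal t u)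
  | rel (n l : ℕ) (R : lang.Relations l) (ts : Fin l → lang.Term (α ⊕ Fin n)) :
      IsDelta0 n (BoundedFormula.rel R ts)
  | imp (n : ℕ) {φ ψ : lang.BoundedFormula α n} :
      IsDelta0 n φ → IsDelta0 n ψ → IsDelta0 n (φ.imp ψ)
  | bdAll (n : ℕ) (t : lang.Term (α ⊕ Fin n)) {φ : lang.BoundedFormula α (n + 1)} :
      IsDelta0 (n + 1) φ →
      IsDelta0 n
        (BoundedFormula.all ((ltFm (Term.var (Sum.inr (Fin.last n))) (t.liftAt 1 n)).imp φ))

mutual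
  /-- Σ_m formulas. -/
  inductive SigmaFm {α : Type} : ℕ → ∀ n : ℕ, lang.BoundedFormula α n → Prop
    | delta0 (m n : ℕ) {φ : lang.BoundedFormula α n} : IsDelta0 n φ → SigmaFm m n φ
    | ofPi (m n : ℕ) {φ : lang.BoundedFormula α n} : PiFm m n φ → SigmaFm (m + 1) n φ
    | ex (m n : ℕ) {φ : lang.BoundedFormula α (n + 1)} :
        SigmaFm (m + 1) (n + 1) φ → SigmaFm (m + 1) n φ.ex
  /-- Π_m formulas. -/
  inductive PiFm {α : Type} : ℕ → ∀ n : ℕ, lang.BoundedFormula α n → Prop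
    | delta0 (m n : ℕ) {φ : lang.BoundedFormula α n} : IsDelta0 n φ → PiFm m n φ
    | ofSigma (m n : ℕ) {φ : lang.BoundedFormula α n} : SigmaFm m n φ → PiFm (m + 1) n φ
    | all (m n : ℕ) {φ : lang.BoundedFormula α (n + 1)} :
        PiFm (m + 1) (n + 1) φ → PiFm (m + 1) n φ.all
end

/-- A `k`-ary relation on `M` is Σ_m-definable (with parameters from `M`). -/
def IsSigmaDef (m : ℕ) (M : Type) [lang.Structure M] {k : ℕ} (R : (Fin k → M) → Prop) : Prop :=
  ∃ (p : ℕ) (φ : lang.BoundedFormula (Fin k ⊕ Fin p) 0) (w : Fin p → M),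
    SigmaFm m 0 φ ∧ ∀ v : Fin k → M, R v ↔ φ.Realize (Sum.elim v w) finZeroElim

/-- A subset of `M` is Σ_m-definable with parameters. -/
def SigmaDef1 (m : ℕ) (M : Type) [lang.Structure M] (A : Set M) : Prop :=
  IsSigmaDef m M (k := 1) fun v => v 0 ∈ A

/-- A binary relation on `M` is Σ_m-definable with parameters. -/
def SigmaDef2 (m : ℕ) (M : Type) [lang.Structure M] (R : M → M → Prop) : Prop :=
  IsSigmaDef m M (k := 2) fun v => R (v 0) (v 1)

/-- A ternary relation on `M` is Σ_m-definable with parameters. -/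
def SigmaDef3 (m : ℕ) (M : Type) [lang.Structure M] (R : M → M → M → Prop) : Prop :=
  IsSigmaDef m M (k := 3) fun v => R (v 0) (v 1) (v 2)

/-- `M` is a model of PA⁻ (the nonnegative part of a discretely ordered
commutative semiring). -/
structure PAm (M : Type) [lang.Structure M] : Prop where
  add_assoc : ∀ x y z : M, x + y + z = x + (y + z)
  add_comm : ∀ x y : M, x + y = y + x
  mul_assoc : ∀ x y z : M, x * y * z = x * (y * z)
  mul_comm : ∀ x y : M, x * y = y * x
  ldistrib : ∀ x y z : M, x * (y + z) = x * y + x * z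
  add_zero : ∀ x : M, x + 0 = x
  mul_zero : ∀ x : M, x * 0 = 0
  mul_one : ∀ x : M, x * 1 = x
  lt_trans : ∀ x y z : M, x < y → y < z → x < z
  lt_irrefl : ∀ x : M, ¬x < x
  lt_total : ∀ x y : M, x < y ∨ x = y ∨ y < x
  add_lt_add : ∀ x y z : M, x < y → x + z < y + z
  mul_lt_mul : ∀ x y z : M, x < y → 0 < z → x * z < y * z
  sub_exists : ∀ x y : M, x < y → ∃ z, x + z = y
  zero_lt_one : (0 : M) < 1
  discrete : ∀ x : M, 0 < x → (1 : M) ≤ x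
  zero_le : ∀ x : M, (0 : M) ≤ x

/-- `M` satisfies the Σ_m-induction scheme (with parameters). -/
def ISig (m : ℕ) (M : Type) [lang.Structure M] : Prop :=
  ∀ A : Set M, SigmaDef1 m M A → (0 : M) ∈ A → (∀ x, x ∈ A → x + 1 ∈ A) → ∀ x, x ∈ A

/-- `M` satisfies the Σ_m-collection (bounding) scheme (with parameters). -/
def BSig (m : ℕ) (M : Type) [lang.Structure M] : Prop :=
  ∀ R : M → M → Prop, SigmaDef2 m M R → ∀ a : M,
    (∀ x, x < a → ∃ y, R x y) → ∃ b, ∀ x, x < a → ∃ y, y < b ∧ R x y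

section Coding

variable {M : Type} [lang.Structure M]

/-- `z` is the Cantor pair `⟨x, y⟩`: `2z = (x+y)(x+y+1) + 2y`. -/
def IsPairC (z x y : M) : Prop := z + z = (x + y) * (x + y + 1) + (y + y)

/-- Gödel's β-function: `x = a mod ((i+1)·b + 1)`. -/
def BetaC (a b i x : M) : Prop :=
  x < (i + 1) * b + 1 ∧ ∃ q, a = q * ((i + 1) * b + 1) + x

/-- The sequence coded by `s` (via a Cantor pair of β-function data) has value `x`
at place `i`. -/
def SeqAt (s i x : M) : Prop := ∃ a b, IsPairC s a b ∧ BetaC a b i x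

/-- `c` codes the M-finite set `X` of cardinality `card`: `c = ⟨card, s⟩` where `s`
codes the strictly increasing enumeration of `X` of length `card`. -/
def CodesFinset (c : M) (X : Set M) (card : M) : Prop :=
  ∃ s, IsPairC c card s ∧
    (∀ i, i < card → ∃ x, x ∈ X ∧ SeqAt s i x) ∧
    (∀ i j x y, i < j → j < card → SeqAt s i x → SeqAt s j y → x < y) ∧
    (∀ x, x ∈ X ↔ ∃ i, i < card ∧ SeqAt s i x)

/-- `X` is an M-finite (coded) set. -/
def MFinite (X : Set M) : Prop := ∃ c card : M, CodesFinset c X card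

/-- `d` codes an `e`-element subset `D` of `[0, y)`, i.e. an element of `[y]^e`. -/
def CodesTupleIn (d e y : M) (D : Set M) : Prop :=
  CodesFinset d D e ∧ ∀ z ∈ D, z < y

/-- `f` codes a (finite) function defined on all of `[0, a)`. -/
def CodesFunOn (f a : M) : Prop :=
  ∀ x, x < a → (∃ y, SeqAt f x y) ∧ ∀ y y', SeqAt f x y → SeqAt f x y' → y = y'

/-- `X` is an M-coded subset of `[0, a)`. -/
def MCodedSubset (a : M) (X : Set M) : Prop :=
  MFinite X ∧ ∀ x ∈ X, x < a

end Coding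

/-- An `M`-ultrafilter on `a`: an ultrafilter of the Boolean algebra of
M-finite subsets of `[0, a)`. -/
structure MUltra (M : Type) [lang.Structure M] (a : M) where
  sets : Set (Set M)
  mem_coded : ∀ X ∈ sets, MCodedSubset a X
  univ_mem : {x : M | x < a} ∈ sets
  superset_mem : ∀ X Y : Set M, X ∈ sets → MCodedSubset a Y → X ⊆ Y → Y ∈ sets
  inter_mem : ∀ X Y : Set M, X ∈ sets → Y ∈ sets → X ∩ Y ∈ sets
  empty_not_mem : (∅ : Set M) ∉ sets
  ultra : ∀ X : Set M, MCodedSubset a X → X ∈ sets ∨ {x : M | x < a ∧ x ∉ X} ∈ sets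

section Principles

variable (M : Type) [lang.Structure M]

/-- `F` is (the graph of) a Σ_m-definable injection from `[0, y)` into `[0, x)`. -/
def SigmaInjRel (m : ℕ) (F : M → M → Prop) (y x : M) : Prop :=
  SigmaDef2 m M F ∧
    (∀ u, u < y → ∃ v, v < x ∧ F u v) ∧
    (∀ u v v', u < y → F u v → F u v' → v = v') ∧
    (∀ u u' v, u < y → u' < y → F u v → F u' v → u = u')

/-- There exists a Σ_m-definable injection from `[0, y)` into `[0, x)`. -/
def ExSigmaInj (m : ℕ) (y x : M) : Prop := ∃ F : M → M → Prop, SigmaInjRel M m F y x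

/-- There exists a Σ_m-definable injection from all of `M` into `[0, a)`. -/
def SigmaInjWhole (m : ℕ) (a : M) : Prop :=
  ∃ F : M → M → Prop, SigmaDef2 m M F ∧
    (∀ u, ∃ v, v < a ∧ F u v) ∧
    (∀ u v v', F u v → F u v' → v = v') ∧
    (∀ u u' v, F u v → F u' v → u = u')

/-- CARD(Σ_m): no Σ_m-definable multivalued map sends `M` injectively below `a`. -/
def CARD (m : ℕ) : Prop :=
  ∀ F : M → M → Prop, SigmaDef2 m M F → ∀ a : M,
    (∀ x, ∃ y, y < a ∧ F x y) →
      ∃ x0 x1 y, x0 ≠ x1 ∧ y < a ∧ F x0 y ∧ F x1 y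

/-- GPHP(Σ_m): for every `x` there is `y` with no Σ_m-definable injection of
`[0,y)` into `[0,x)`. -/
def GPHP (m : ℕ) : Prop := ∀ x : M, ∃ y : M, ¬ExSigmaInj M m y x

/-- WPHP(Σ_m): for `x > 0` there is no Σ_m-definable injection of `[0,2x)` into `[0,x)`. -/
def WPHP (m : ℕ) : Prop := ∀ x : M, 0 < x → ¬ExSigmaInj M m (x + x) x

/-- `C` is a Σ_m-definable `k`-coloring of `[y]^e` (acting on codes of
`e`-element subsets of `[0,y)`, independently of the chosen code). -/
def IsColoring (m : ℕ) (e y k : M) (C : M → M → Prop) : Prop :=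
  SigmaDef2 m M C ∧
    (∀ d D, CodesTupleIn d e y D → ∃ i, i < k ∧ C d i) ∧
    (∀ d d' D i i', CodesTupleIn d e y D → CodesTupleIn d' e y D → C d i → C d' i' → i = i')

/-- FRT^e_k(Σ_m): every Σ_m-definable `k`-coloring of some `[y]^e` has an
M-finite homogeneous set of cardinality `x`, for every `x`. -/
def FRT (m : ℕ) (e k : M) : Prop :=
  ∀ x : M, ∃ y : M, ∀ C : M → M → Prop, IsColoring M m e y k C →
    ∃ (c : M) (H : Set M), CodesFinset c H x ∧ (∀ z ∈ H, z < y) ∧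
      ∃ i, ∀ d D, CodesFinset d D e → D ⊆ H → C d i

/-- fairFRT^e_k(Σ_m): the homogeneous set is required to be given as the range of a
Σ_m-definable injection from `[0,x)` into `[0,y)`. -/
def FairFRT (m : ℕ) (e k : M) : Prop :=
  ∀ x : M, ∃ y : M, ∀ C : M → M → Prop, IsColoring M m e y k C →
    ∃ H : M → M → Prop, SigmaInjRel M m H x y ∧
      ∃ i, ∀ d D, CodesFinset d D e → (∀ z ∈ D, ∃ u, u < x ∧ H u z) → C d i

/-- `C` is a Σ_m-definable `k`-coloring of `[0, y)`. -/
def IsColoring1 (m : ℕ) (y k : M) (C : M → M → Prop) : Prop :=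
  SigmaDef2 m M C ∧
    (∀ z, z < y → ∃ i, i < k ∧ C z i) ∧
    (∀ z i i', z < y → C z i → C z i' → i = i')

/-- FRT¹_k(Σ_m): every Σ_m-definable `k`-coloring of some `[0,y)` has an M-finite
homogeneous set of cardinality `x`, for every `x`. -/
def FRT1 (m : ℕ) (k : M) : Prop :=
  ∀ x : M, ∃ y : M, ∀ C : M → M → Prop, IsColoring1 M m y k C →
    ∃ (c : M) (H : Set M), CodesFinset c H x ∧ (∀ z ∈ H, z < y) ∧
      ∃ i, ∀ z ∈ H, C z i

/-- fairFRT¹_k(Σ_m). -/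
def FairFRT1 (m : ℕ) (k : M) : Prop :=
  ∀ x : M, ∃ y : M, ∀ C : M → M → Prop, IsColoring1 M m y k C →
    ∃ H : M → M → Prop, SigmaInjRel M m H x y ∧
      ∃ i, ∀ u v, u < x → H u v → C v i

end Principles

section Approx

variable {M : Type} [lang.Structure M]

/-- `f` is (the graph of) a partial function. -/
def IsPartialFun (f : M → M → Prop) : Prop := ∀ x y y', f x y → f x y' → y = y'

/-- `s` codes an approximation to the partial function `f` of length `b`. -/
def IsApprox (f : M → M → Prop) (s b : M) : Prop :=
  (∀ i, i < b → ∃ v, SeqAt s i v) ∧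
    (∀ i u v x y, i + 1 < b → SeqAt s i u → SeqAt s (i + 1) v → x ≤ u → f x y → y ≤ v)

/-- `s` codes a `g`-stretched approximation to the partial function `f` of length `b`. -/
def IsStretchedApprox (f g : M → M → Prop) (s b : M) : Prop :=
  (∀ i, i < b → ∃ v, SeqAt s i v) ∧
    (∀ i u w v x y, i + 1 < b → SeqAt s i u → g u w → SeqAt s (i + 1) v →
      x ≤ w → f x y → y ≤ v)

/-- The eventual (limit) value of `fun s => h s ·` is `x`. -/
def EvLim (h : M → M → Prop) (x : M) : Prop := ∃ s : M, ∀ t, s < t → h t x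

end Approx

/-- PΣ_m: every partial Σ_m-definable function admits approximations of every length. -/
def PSig (m : ℕ) (M : Type) [lang.Structure M] : Prop :=
  ∀ f : M → M → Prop, SigmaDef2 m M f → IsPartialFun f → ∀ b : M, ∃ s, IsApprox f s b

section Extensions

variable (M N : Type) [lang.Structure M] [lang.Structure N]

/-- `g : M → N` is Σ_m-elementary: Σ_m formulas with parameters from `M` transfer. -/
def SigmaElem (m : ℕ) (g : M → N) : Prop :=
  ∀ (p : ℕ) (φ : lang.BoundedFormula (Fin p) 0), SigmaFm m 0 φ →
    ∀ v : Fin p → M, (φ.Realize v finZeroElim ↔ φ.Realize (g ∘ v) finZeroElim)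

/-- The extension `g : M → N` is cofinal. -/
def Cofinal (g : M → N) : Prop := ∀ z : N, ∃ x : M, z ≤ g x

/-- `[0,a]^M = [0,a]^N`: every element of `N` below `g a` comes from `M`. -/
def SameBelow (g : M → N) (a : M) : Prop := ∀ z : N, z ≤ g a → ∃ x : M, g x = z

end Extensions

section Ramsey

variable {M : Type} [lang.Structure M]

/-- `f` is an M-coded `k`-coloring of `[y]^e` (assigning colors to codes of
`e`-subsets of `[0,y)`, independently of the code). -/
def CodedColoring (f e y k : M) : Prop :=
  (∀ d D, CodesTupleIn d e y D → ∃ i, i < k ∧ SeqAt f d i) ∧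
    (∀ d d' D i i', CodesTupleIn d e y D → CodesTupleIn d' e y D →
      SeqAt f d i → SeqAt f d' i' → i = i')

/-- The coded coloring `f` of `[y]^e` has an M-coded homogeneous set of cardinality `x`. -/
def CodedHomog (f e y x : M) : Prop :=
  ∃ (c : M) (H : Set M), CodesFinset c H x ∧ (∀ z ∈ H, z < y) ∧
    ∃ i, ∀ d D, CodesFinset d D e → D ⊆ H → SeqAt f d i

/-- `y = r(x, e, k)`: `y` is the least size guaranteeing coded homogeneous sets of
cardinality `x` for all coded `k`-colorings of `e`-subsets. -/
def IsRamsey (x e k y : M) : Prop :=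
  (∀ f, CodedColoring f e y k → CodedHomog f e y x) ∧
    (∀ y', y' < y → ∃ f, CodedColoring f e y' k ∧ ¬CodedHomog f e y' x)

/-- `y = r^(b)(x, e, k)`: the `b`-th iterate of the Ramsey function inside `M`. -/
def IterRamsey (x e k b y : M) : Prop :=
  ∃ s : M, SeqAt s 0 x ∧ SeqAt s b y ∧ (∀ i, i ≤ b → ∃ u, SeqAt s i u) ∧
    (∀ i u v, i < b → SeqAt s i u → SeqAt s (i + 1) v → IsRamsey u e k v)

end Ramsey

end ArithFC

namespace ArithFC

section Gen
variable {M : Type} [lang.Structure M]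

/-- Extend a valuation by one value at the end. -/
abbrev sn {X : Type} {k : ℕ} (v : Fin k → X) (y : X) : Fin (k + 1) → X :=
  Fin.snoc (α := fun _ => X) v y

/-- Semantic terms (polynomials with parameters). -/
inductive Tm : ∀ k : ℕ, ((Fin k → M) → M) → Prop
  | var (k : ℕ) (i : Fin k) : Tm k (fun v => v i)
  | const (k : ℕ) (c : M) : Tm k (fun _ => c)
  | add {k : ℕ} {t u : (Fin k → M) → M} : Tm k t → Tm k u → Tm k (fun v => t v + u v)
  | mul {k : ℕ} {t u : (Fin k → M) → M} : Tm k t → Tm k u → Tm k (fun v => t v * u v)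

/-- Semantic bounded relations. -/
inductive D0 : ∀ k : ℕ, ((Fin k → M) → Prop) → Prop
  | falsum (k : ℕ) : D0 k (fun _ => False)
  | eq {k : ℕ} {t u : (Fin k → M) → M} : Tm k t → Tm k u → D0 k (fun v => t v = u v)
  | lt {k : ℕ} {t u : (Fin k → M) → M} : Tm k t → Tm k u → D0 k (fun v => t v < u v)
  | imp {k : ℕ} {R Q : (Fin k → M) → Prop} : D0 k R → D0 k Q → D0 k (fun v => R v → Q v)
  | ball {k : ℕ} {t : (Fin k → M) → M} {R : (Fin (k + 1) → M) → Prop} :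
      Tm k t → D0 (k + 1) R → D0 k (fun v => ∀ y, y < t v → R (sn v y))

/-- Semantic version of the Σ_m relations, with single quantifier blocks. -/
def S : ℕ → ∀ {k : ℕ}, ((Fin k → M) → Prop) → Prop
  | 0, k, R => D0 k R
  | m + 1, k, R => ∃ P : (Fin (k + 1) → M) → Prop, S m P ∧ ∀ v, R v ↔ ∃ y, ¬ P (sn v y)

theorem Tm.subst {k j : ℕ} {t : (Fin k → M) → M} (ht : Tm k t) (G : (Fin j → M) → Fin k → M)
    (hG : ∀ i, Tm j (fun v => G v i)) : Tm j (fun v => t (G v)) := by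
  induction ht with
  | var i => exact hG i
  | const c => exact Tm.const _ c
  | add _ _ h1 h2 => exact Tm.add h1 h2
  | mul _ _ h1 h2 => exact Tm.mul h1 h2

theorem Tm.sn {k j : ℕ} {G : (Fin j → M) → Fin k → M} (hG : ∀ i, Tm j (fun v => G v i))
    {t : (Fin j → M) → M} (ht : Tm j t) : ∀ i, Tm j (fun v => sn (G v) (t v) i) := by
  intro i
  refine Fin.lastCases ?_ (fun i => ?_) i
  · simpa [ArithFC.sn] using ht
  · simpa [ArithFC.sn] using hG i

theorem Tm.init {k j : ℕ} {G : (Fin j → M) → Fin (k + 1) → M} (hG : ∀ i, Tm j (fun v => G v i)) :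
    ∀ i : Fin k, Tm j (fun v => Fin.init (G v) i) := fun i => hG i.castSucc

theorem Tm.id {k : ℕ} : ∀ i : Fin k, Tm (M := M) k (fun v => v i) := fun i => Tm.var k i

theorem D0.congr {k : ℕ} {R Q : (Fin k → M) → Prop} (h : D0 k R) (e : ∀ v, Q v ↔ R v) :
    D0 k Q := by
  have : Q = R := funext fun v => propext (e v)
  rwa [this]

theorem S.congr {m k : ℕ} {R Q : (Fin k → M) → Prop} (h : S m R) (e : ∀ v, Q v ↔ R v) :
    S m Q := by
  have : Q = R := funext fun v => propext (e v)
  rwa [this]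

theorem D0.subst {k j : ℕ} {R : (Fin k → M) → Prop} (hR : D0 k R) (G : (Fin j → M) → Fin k → M)
    (hG : ∀ i, Tm j (fun v => G v i)) : D0 j (fun v => R (G v)) := by
  induction hR generalizing j with
  | falsum k => exact D0.falsum _
  | eq h1 h2 => exact D0.eq (h1.subst G hG) (h2.subst G hG)
  | lt h1 h2 => exact D0.lt (h1.subst G hG) (h2.subst G hG)
  | imp _ _ h1 h2 => exact D0.imp (h1 G hG) (h2 G hG)
  | ball ht _ ih =>
    have := ih (fun w : Fin (j + 1) → M => ArithFC.sn (G (Fin.init w)) (w (Fin.last j)))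
      (Tm.sn (fun i => (hG i).subst _ (Tm.init Tm.id)) (Tm.var _ _))
    refine (D0.ball (ht.subst G hG) this).congr fun v => ?_
    simp [ArithFC.sn]

theorem S.subst {m k j : ℕ} {R : (Fin k → M) → Prop} (hR : S m R) (G : (Fin j → M) → Fin k → M)
    (hG : ∀ i, Tm j (fun v => G v i)) : S m (fun v => R (G v)) := by
  induction m generalizing k j with
  | zero => exact D0.subst hR G hG
  | succ m ih =>
    obtain ⟨P, hP, e⟩ := hR
    refine ⟨_, ih hP (fun w : Fin (j + 1) → M => ArithFC.sn (G (Fin.init w)) (w (Fin.last j)))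
      (Tm.sn (fun i => (hG i).subst _ (Tm.init Tm.id)) (Tm.var _ _)), fun v => ?_⟩
    simp [ArithFC.sn, e]

theorem D0.not {k : ℕ} {R : (Fin k → M) → Prop} (h : D0 k R) : D0 k (fun v => ¬ R v) :=
  D0.imp h (D0.falsum k)

theorem D0.and {k : ℕ} {R Q : (Fin k → M) → Prop} (h : D0 k R) (h' : D0 k Q) :
    D0 k (fun v => R v ∧ Q v) :=
  (D0.imp h h'.not).not.congr fun v => by tauto

theorem D0.or {k : ℕ} {R Q : (Fin k → M) → Prop} (h : D0 k R) (h' : D0 k Q) :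
    D0 k (fun v => R v ∨ Q v) :=
  (D0.imp h.not h').congr fun v => by tauto

theorem D0.ball' {k : ℕ} {t : (Fin k → M) → M} {R : (Fin k → M) → M → Prop} (ht : Tm k t)
    (h : D0 (k + 1) (fun w : Fin (k + 1) → M => R (Fin.init w) (w (Fin.last k)))) :
    D0 k (fun v => ∀ y, y < t v → R v y) :=
  (D0.ball ht h).congr fun v => by simp [ArithFC.sn]

theorem D0.bex {k : ℕ} {t : (Fin k → M) → M} {R : (Fin k → M) → M → Prop} (ht : Tm k t)
    (h : D0 (k + 1) (fun w : Fin (k + 1) → M => R (Fin.init w) (w (Fin.last k)))) :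
    D0 k (fun v => ∃ y, y < t v ∧ R v y) :=
  (D0.ball' (R := fun v y => ¬ R v y) ht h.not).not.congr fun v => by
    push Not
    rfl

theorem S.neg {m k : ℕ} {R : (Fin k → M) → Prop} (h : S m R) : S (m + 1) (fun v => ¬ R v) :=
  ⟨fun w => R (Fin.init w), h.subst _ (Tm.init Tm.id), fun v => by
    simp only [ArithFC.sn, Fin.init_snoc]
    exact ⟨fun h => ⟨0, h⟩, fun ⟨_, h⟩ => h⟩⟩

theorem S.up {m k : ℕ} {R : (Fin k → M) → Prop} (h : S m R) : S (m + 1) R := by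
  induction m generalizing k with
  | zero =>
    exact (S.neg (m := 0) (D0.not h)).congr fun v => by simp
  | succ m ih =>
    obtain ⟨P, hP, e⟩ := h
    exact ⟨P, ih hP, e⟩

theorem S.mono {m m' k : ℕ} (hm : m ≤ m') {R : (Fin k → M) → Prop} (h : S m R) : S m' R := by
  induction hm with
  | refl => exact h
  | step _ ih => exact ih.up

/-- Closure under conjunction, disjunction and bounded existential quantification. -/
structure Cl (M : Type) [lang.Structure M] (m : ℕ) : Prop where
  and : ∀ {k : ℕ} {R Q : (Fin k → M) → Prop}, S m R → S m Q → S m (fun v => R v ∧ Q v)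
  or : ∀ {k : ℕ} {R Q : (Fin k → M) → Prop}, S m R → S m Q → S m (fun v => R v ∨ Q v)
  bex : ∀ {k : ℕ} {t : (Fin k → M) → M} {R : (Fin k → M) → M → Prop}, Tm k t →
    S m (fun w : Fin (k + 1) → M => R (Fin.init w) (w (Fin.last k))) →
    S m (fun v => ∃ y, y < t v ∧ R v y)

/-- Closure under bounded universal quantification. -/
def BallCl (M : Type) [lang.Structure M] (m : ℕ) : Prop :=
  ∀ ⦃k : ℕ⦄ ⦃t : (Fin k → M) → M⦄ ⦃R : (Fin k → M) → M → Prop⦄, Tm k t →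
    S m (fun w : Fin (k + 1) → M => R (Fin.init w) (w (Fin.last k))) →
    S m (fun v => ∀ y, y < t v → R v y)

/-- Closure under existential quantification. -/
def ExCl (M : Type) [lang.Structure M] (m : ℕ) : Prop :=
  ∀ ⦃k : ℕ⦄ ⦃R : (Fin k → M) → M → Prop⦄,
    S m (fun w : Fin (k + 1) → M => R (Fin.init w) (w (Fin.last k))) →
    S m (fun v => ∃ y, R v y)

/-- Semantic induction. -/
def ISem (M : Type) [lang.Structure M] (m : ℕ) : Prop :=
  ∀ A : M → Prop, S m (fun v : Fin 1 → M => A (v 0)) → A 0 → (∀ x, A x → A (x + 1)) → ∀ x, A x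

section

theorem PAm.lt_succ (hM : PAm M) (x : M) : x < x + 1 := by
  have := hM.add_lt_add 0 1 x hM.zero_lt_one
  rwa [hM.add_comm, hM.add_zero, hM.add_comm] at this

theorem PAm.not_lt_zero (hM : PAm M) (x : M) : ¬ x < 0 := by
  intro h
  rcases hM.zero_le x with h' | h'
  · exact hM.lt_irrefl _ (hM.lt_trans _ _ _ h h')
  · exact hM.lt_irrefl x (by rw [← h'] at h ⊢; exact h)

theorem PAm.zero_add (hM : PAm M) (x : M) : 0 + x = x := by rw [hM.add_comm, hM.add_zero]

theorem PAm.lt_succ_iff (hM : PAm M) (x y : M) : x < y + 1 ↔ x < y ∨ x = y := by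
  constructor
  · intro h
    rcases hM.lt_total x y with h' | h' | h'
    · exact Or.inl h'
    · exact Or.inr h'
    · exfalso
      obtain ⟨z, rfl⟩ := hM.sub_exists _ _ h'
      have hz : (0 : M) < z := by
        rcases hM.zero_le z with h0 | h0
        · exact h0
        · rw [← h0, hM.add_zero] at h'
          exact absurd h' (hM.lt_irrefl _)
      rcases hM.discrete z hz with h1 | h1
      · have := hM.add_lt_add _ _ y h1
        rw [hM.add_comm 1, hM.add_comm z] at this
        exact hM.lt_irrefl _ (hM.lt_trans _ _ _ h this)
      · rw [← h1] at h
        exact hM.lt_irrefl _ h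
  · rintro (h | rfl)
    · exact hM.lt_trans _ _ _ h (hM.lt_succ y)
    · exact hM.lt_succ x

theorem PAm.ub (hM : PAm M) (x y : M) : ∃ b, x < b ∧ y < b := by
  rcases hM.lt_total x y with h | h | h
  · exact ⟨y + 1, hM.lt_trans _ _ _ h (hM.lt_succ y), hM.lt_succ y⟩
  · exact ⟨y + 1, h ▸ hM.lt_succ y, hM.lt_succ y⟩
  · exact ⟨x + 1, hM.lt_succ x, hM.lt_trans _ _ _ h (hM.lt_succ x)⟩

theorem cl_zero (hM : PAm M) : Cl M 0 where
  and := D0.and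
  or := D0.or
  bex := D0.bex

theorem ball_zero (hM : PAm M) : BallCl M 0 := fun _ _ _ => D0.ball'

theorem ex_step (hM : PAm M) {m : ℕ} (hB : BallCl M m) : ExCl M (m + 1) := by
  rintro k R ⟨P, hP, e⟩
  refine ⟨fun w => ∀ x, x < w (Fin.last k) → ∀ y, y < w (Fin.last k) →
      P (sn (sn (Fin.init w) x) y), ?_, fun v => ?_⟩
  · refine hB (Tm.var _ _) (hB (Tm.var _ (Fin.last k).castSucc) (hP.subst _ ?_))
    exact Tm.sn (Tm.sn (Tm.init (Tm.init (Tm.init Tm.id))) (Tm.var _ (Fin.last (k+1)).castSucc))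
      (Tm.var _ _)
  · have e' : ∀ y, R v y ↔ ∃ z, ¬ P (sn (sn v y) z) := fun y => by
      rw [← e]; simp [sn]
    simp only [sn, Fin.init_snoc, Fin.snoc_last]
    constructor
    · rintro ⟨y, hy⟩
      obtain ⟨z, hz⟩ := (e' y).1 hy
      obtain ⟨b, h1, h2⟩ := hM.ub y z
      exact ⟨b, fun H => hz (H y h1 z h2)⟩
    · rintro ⟨b, hb⟩
      push Not at hb
      obtain ⟨x, _, y, _, h⟩ := hb
      exact ⟨x, (e' x).2 ⟨y, h⟩⟩

theorem cl_step (hM : PAm M) {m : ℕ} (hC : Cl M m) (hB : BallCl M m) : Cl M (m + 1) := by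
  have hand : ∀ {k : ℕ} {R Q : (Fin k → M) → Prop}, S (m+1) R → S (m+1) Q →
      S (m+1) (fun v => R v ∧ Q v) := by
    rintro k R Q ⟨P, hP, e⟩ ⟨P', hP', e'⟩
    refine ⟨fun w => (∀ y, y < w (Fin.last k) → P (sn (Fin.init w) y)) ∨
      (∀ y, y < w (Fin.last k) → P' (sn (Fin.init w) y)), ?_, fun v => ?_⟩
    · exact hC.or (hB (Tm.var _ _) (hP.subst _ (Tm.sn (Tm.init (Tm.init Tm.id)) (Tm.var _ _))))
        (hB (Tm.var _ _) (hP'.subst _ (Tm.sn (Tm.init (Tm.init Tm.id)) (Tm.var _ _))))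
    · simp only [e, e', sn, Fin.init_snoc, Fin.snoc_last]
      push Not
      constructor
      · rintro ⟨⟨x, hx⟩, ⟨y, hy⟩⟩
        obtain ⟨b, h1, h2⟩ := hM.ub x y
        exact ⟨b, ⟨x, h1, hx⟩, ⟨y, h2, hy⟩⟩
      · rintro ⟨b, ⟨x, _, hx⟩, ⟨y, _, hy⟩⟩
        exact ⟨⟨x, hx⟩, ⟨y, hy⟩⟩
  refine ⟨hand, ?_, ?_⟩
  · rintro k R Q ⟨P, hP, e⟩ ⟨P', hP', e'⟩
    refine ⟨_, hC.and hP hP', fun v => ?_⟩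
    simp only [e, e', not_and_or, exists_or]
  · intro k t R ht hR
    refine ex_step hM hB (R := fun v y => y < t v ∧ R v y) (hand ?_ hR)
    exact S.mono (Nat.zero_le _) (m := 0)
      (D0.lt (Tm.var _ _) (ht.subst _ (Tm.init Tm.id)))

theorem ball_step (hM : PAm M) {m : ℕ} (hC : Cl M m) (hB : BallCl M m) (hI : ISem M (m + 1)) :
    BallCl M (m + 1) := by
  rintro k t R ht ⟨P, hP, e⟩
  refine ⟨fun w => ∃ y, y < t (Fin.init w) ∧ ∀ z, z < w (Fin.last k) →
    P (sn (sn (Fin.init w) y) z), ?_, fun v => ?_⟩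
  · refine hC.bex (ht.subst _ (Tm.init Tm.id)) (hB (Tm.var _ (Fin.last k).castSucc) (hP.subst _ ?_))
    exact Tm.sn (Tm.sn (Tm.init (Tm.init (Tm.init Tm.id))) (Tm.var _ (Fin.last (k+1)).castSucc))
      (Tm.var _ _)
  · have e' : ∀ y, R v y ↔ ∃ z, ¬ P (sn (sn v y) z) := fun y => by
      rw [← e]; simp [sn]
    have hset : S (m+1) (fun u : Fin 1 → M => ∃ b, ¬ ∃ y, y < u 0 ∧
        (y < t v ∧ ∀ z, z < b → P (sn (sn v y) z))) := by
      refine ⟨fun (w : Fin 2 → M) => ∃ y : M, y < w 0 ∧ (y < t v ∧ ∀ z, z < w 1 → P (sn (sn v y) z)), ?_, ?_⟩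
      · refine hC.bex (R := fun (w : Fin 2 → M) (y : M) => y < t v ∧ ∀ z, z < w 1 → P (sn (sn v y) z)) (Tm.var _ _)
          (hC.and ?_ ?_)
        · exact S.mono (Nat.zero_le _) (m := 0) (D0.lt (Tm.var _ _) (Tm.const _ _))
        · refine hB (Tm.var _ (1 : Fin 2).castSucc) (hP.subst _ ?_)
          exact Tm.sn (Tm.sn (G := fun _ => v) (fun i => Tm.const _ (v i)) (Tm.var _ (Fin.last 2).castSucc))
            (Tm.var _ _)
      · intro u; rfl
    simp only [sn, Fin.init_snoc, Fin.snoc_last] at e' ⊢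
    constructor
    · intro h
      have key := hI (fun c => ∃ b, ¬ ∃ y, y < c ∧
        (y < t v ∧ ∀ z, z < b → P (sn (sn v y) z))) hset
        ⟨0, fun ⟨y, hy, _⟩ => hM.not_lt_zero y hy⟩ ?_ (t v)
      · obtain ⟨b, hb⟩ := key
        refine ⟨b, fun ⟨y, hy, H⟩ => hb ⟨y, hy, hy, H⟩⟩
      · rintro x ⟨b, hb⟩
        by_cases hx : x < t v
        · obtain ⟨z, hz⟩ := (e' x).1 (h x hx)
          obtain ⟨b', h1, h2⟩ := hM.ub b z
          refine ⟨b', ?_⟩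
          rintro ⟨y, hy, hyt, H⟩
          rcases (hM.lt_succ_iff _ _).1 hy with hy | rfl
          · exact hb ⟨y, hy, hyt, fun z' hz' => H z' (hM.lt_trans _ _ _ hz' h1)⟩
          · exact hz (H z h2)
        · refine ⟨b, ?_⟩
          rintro ⟨y, hy, hyt, H⟩
          rcases (hM.lt_succ_iff _ _).1 hy with hy | rfl
          · exact hb ⟨y, hy, hyt, H⟩
          · exact hx hyt
    · rintro ⟨b, hb⟩ y hy
      push Not at hb
      obtain ⟨z, _, hz⟩ := hb y hy
      exact (e' y).2 ⟨z, hz⟩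

theorem ISem.mono (hM : PAm M) {m n : ℕ} (h : m ≤ n) (hI : ISem M n) : ISem M m :=
  fun A hA => hI A (hA.mono h)

theorem cl_all (hM : PAm M) {n : ℕ} (hI : ISem M n) : ∀ m, m ≤ n → Cl M m ∧ BallCl M m := by
  intro m
  induction m with
  | zero => exact fun _ => ⟨cl_zero hM, ball_zero hM⟩
  | succ m ih =>
    intro h
    obtain ⟨h1, h2⟩ := ih (by omega)
    exact ⟨cl_step hM h1 h2, ball_step hM h1 h2 (hI.mono hM h)⟩

theorem cl_le (hM : PAm M) {n : ℕ} (hI : ISem M n) (m : ℕ) (h : m ≤ n + 1) : Cl M m := by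
  rcases Nat.lt_or_ge n m with h' | h'
  · obtain rfl : m = n + 1 := by omega
    have := cl_all hM hI n le_rfl
    exact cl_step hM this.1 this.2
  · exact (cl_all hM hI m h').1

theorem ex_le (hM : PAm M) {n : ℕ} (hI : ISem M n) (m : ℕ) (h : m ≤ n) : ExCl M (m + 1) :=
  ex_step hM (cl_all hM hI m h).2

/-- Least number principle for complements of Σ_n sets. -/
theorem lnp (hM : PAm M) {n : ℕ} (hI : ISem M n) (A : M → Prop) (hA : S n (fun v : Fin 1 → M => ¬ A (v 0)))
    {x : M} (hx : A x) : ∃ y, A y ∧ ∀ z, z < y → ¬ A z := by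
  by_contra hcon
  push Not at hcon
  have hB : BallCl M n := (cl_all hM hI n le_rfl).2
  have := hI (fun x => ∀ z, z < x → ¬ A z) (hB (R := fun _ z => ¬ A z) (Tm.var _ _) ?_)
    (fun z hz => absurd hz (hM.not_lt_zero z)) ?_ (x + 1) x (hM.lt_succ x)
  · exact this hx
  · exact hA.subst (fun w i => w (Fin.last 1)) (fun i => Tm.var _ _)
  · intro x h z hz
    rcases (hM.lt_succ_iff _ _).1 hz with hz | rfl
    · exact h z hz
    · intro hz'
      obtain ⟨w, hw, hw'⟩ := hcon z hz'
      exact h w hw hw'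

/-- Uniformization of Σ_{n+1} relations in models of IΣ_n. -/
theorem uniformize (hM : PAm M) {n k : ℕ} (hI : ISem M n) {R : (Fin k → M) → M → Prop}
    (hR : S (n + 1) (fun w : Fin (k + 1) → M => R (Fin.init w) (w (Fin.last k)))) :
    ∃ Q : (Fin k → M) → M → Prop,
      S (n + 1) (fun w : Fin (k + 1) → M => Q (Fin.init w) (w (Fin.last k))) ∧
      (∀ v y, Q v y → R v y) ∧ (∀ v y y', Q v y → Q v y' → y = y') ∧
      (∀ v, (∃ y, R v y) → ∃ y, Q v y) := by
  obtain ⟨P, hP, e⟩ := hR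
  have e' : ∀ v y, R v y ↔ ∃ z, ¬ P (sn (sn v y) z) := fun v y => by
    rw [← e]; simp [sn]
  have hB : BallCl M n := (cl_all hM hI n le_rfl).2
  have hC := cl_le hM hI (n + 1) le_rfl
  have hE : ExCl M (n + 1) := ex_le hM hI n le_rfl
  -- `L v b y` : no witness below `b` for `y`
  let L : (Fin k → M) → M → M → Prop := fun v b y => ∀ z, z < b → P (sn (sn v y) z)
  refine ⟨fun v y => ∃ b, ¬ L v b y ∧ (∀ b', b' < b → ∀ y', y' < b' → L v b' y') ∧
      (∀ y', y' < y → L v b y') ∧ y < b, ?_, ?_, ?_, ?_⟩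
  · have hL : ∀ {j : ℕ} (G : (Fin j → M) → Fin k → M) (b y : (Fin j → M) → M),
        (∀ i, Tm j (fun v => G v i)) → Tm j b → Tm j y → S n (fun v => L (G v) (b v) (y v)) := by
      intro j G b y hG hb hy
      refine hB hb (hP.subst _ ?_)
      exact Tm.sn (Tm.sn (fun i => (hG i).subst _ (Tm.init Tm.id)) (hy.subst _ (Tm.init Tm.id)))
        (Tm.var _ _)
    refine hE (hC.and ?_ (hC.and ?_ (hC.and ?_ ?_)))
    · exact S.neg (hL _ _ _ (Tm.init (Tm.init Tm.id)) (Tm.var _ _) (Tm.var _ (Fin.last k).castSucc))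
    · refine S.up (hB (Tm.var _ _) (hB (Tm.var _ _) (hL _ _ _ ?_ ?_ (Tm.var _ _))))
      · exact Tm.init (Tm.init (Tm.init (Tm.init Tm.id)))
      · exact Tm.var _ (Fin.last (k+2)).castSucc
    · refine S.up (hB (Tm.var _ (Fin.last k).castSucc) (hL _ _ _ ?_ ?_ (Tm.var _ _)))
      · exact Tm.init (Tm.init (Tm.init Tm.id))
      · exact Tm.var _ (Fin.last (k+1)).castSucc
    · exact S.mono (Nat.zero_le _) (m := 0)
        (D0.lt (Tm.var _ (Fin.last k).castSucc) (Tm.var _ _))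
  · rintro v y ⟨b, h, -⟩
    simp only [L] at h
    push Not at h
    obtain ⟨z, _, hz⟩ := h
    exact (e' v y).2 ⟨z, hz⟩
  · rintro v y y' ⟨b, h1, h2, h3, h4⟩ ⟨b', h1', h2', h3', h4'⟩
    have hbb : b = b' := by
      rcases hM.lt_total b b' with h | h | h
      · exact absurd (h2' b h y h4) h1
      · exact h
      · exact absurd (h2 b' h y' h4') h1'
    subst hbb
    rcases hM.lt_total y y' with h | h | h
    · exact absurd (h3' y h) h1
    · exact h
    · exact absurd (h3 y' h) h1'
  · rintro v ⟨y, hy⟩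
    obtain ⟨z, hz⟩ := (e' v y).1 hy
    obtain ⟨b0, hb0, hb0'⟩ := hM.ub y z
    have hL0 : ¬ L v b0 y := fun h => hz (h z hb0')
    have hLS : ∀ {j : ℕ} (b y : (Fin j → M) → M),
        Tm j b → Tm j y → S n (fun w => L v (b w) (y w)) := by
      intro j b y hb hy
      refine hB hb (hP.subst _ ?_)
      exact Tm.sn (Tm.sn (G := fun _ => v) (fun i => Tm.const _ (v i)) (hy.subst _ (Tm.init Tm.id)))
        (Tm.var _ _)
    obtain ⟨b, hb, hbmin⟩ := lnp hM hI (fun b => ∃ y, y < b ∧ ¬ L v b y) (by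
      refine S.congr (R := fun u : Fin 1 → M => ∀ y, y < u 0 → L v (u 0) y) ?_ ?_
      · exact hB (Tm.var _ _) (hLS _ _ (Tm.var _ (0 : Fin 1).castSucc) (Tm.var _ _))
      · intro u; push Not; rfl) ⟨y, hb0, hL0⟩
    obtain ⟨y1, hy1, hy1'⟩ := hb
    obtain ⟨y2, hy2, hy2min⟩ := lnp hM hI (fun y => ¬ L v b y) (by
      refine (hLS (j := 1) (fun _ => b) (fun u => u 0) (Tm.const _ _) (Tm.var _ _)).congr ?_
      intro u; push Not; rfl) hy1'
    refine ⟨y2, b, hy2, ?_, ?_, ?_⟩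
    · intro b' hb' y' hy'
      by_contra hc
      exact hbmin b' hb' ⟨y', hy', hc⟩
    · intro y' hy'
      by_contra hc
      exact hy2min y' hy' hc
    · rcases hM.lt_total y2 y1 with h | h | h
      · exact hM.lt_trans _ _ _ h hy1
      · exact h ▸ hy1
      · exact absurd hy1' (hy2min y1 h)

end
end Gen
end ArithFC

namespace ArithFC

section Trans
variable {M : Type} [lang.Structure M]

theorem tm_of_term {β : Type} {j : ℕ} (t : lang.Term β) (f : β → (Fin j → M) → M)
    (hf : ∀ b, Tm j (f b)) : Tm j (fun v => t.realize (fun b => f b v)) := by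
  induction t with
  | var b => exact hf b
  | func F ts ih =>
    cases F with
    | zero =>
      have : (fun v : Fin j → M => (Term.func (L := lang) Func.zero ts).realize (fun b => f b v))
          = fun _ => (0 : M) := by
        funext v
        simp only [Term.realize]
        exact congrArg _ (Subsingleton.elim _ _)
      rw [this]; exact Tm.const _ _
    | one =>
      have : (fun v : Fin j → M => (Term.func (L := lang) Func.one ts).realize (fun b => f b v))
          = fun _ => (1 : M) := by
        funext v
        simp only [Term.realize]
        exact congrArg _ (Subsingleton.elim _ _)
      rw [this]; exact Tm.const _ _
    | add =>
      have : (fun v : Fin j → M => (Term.func (L := lang) Func.add ts).realize (fun b => f b v))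
          = fun v => (ts 0).realize (fun b => f b v) + (ts 1).realize (fun b => f b v) := by
        funext v
        simp only [Term.realize]
        refine congrArg _ (funext fun i => ?_)
        match i with
        | 0 => rfl
        | 1 => rfl
      rw [this]; exact Tm.add (ih 0) (ih 1)
    | mul =>
      have : (fun v : Fin j → M => (Term.func (L := lang) Func.mul ts).realize (fun b => f b v))
          = fun v => (ts 0).realize (fun b => f b v) * (ts 1).realize (fun b => f b v) := by
        funext v
        simp only [Term.realize]
        refine congrArg _ (funext fun i => ?_)
        match i with
        | 0 => rfl
        | 1 => rfl
      rw [this]; exact Tm.mul (ih 0) (ih 1)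

theorem tm_of_term' {α : Type} {k j : ℕ} (t : lang.Term (α ⊕ Fin k)) (f : α → (Fin j → M) → M)
    (g : (Fin j → M) → Fin k → M) (hf : ∀ b, Tm j (f b)) (hg : ∀ i, Tm j (fun v => g v i)) :
    Tm j (fun v => t.realize (Sum.elim (fun b => f b v) (g v))) := by
  have := tm_of_term t (fun b v => Sum.elim (fun b => f b v) (g v) b) (by
    rintro (b | i)
    · exact hf b
    · exact hg i)
  exact this

theorem realize_ltFm {α : Type} {k : ℕ} (t u : lang.Term (α ⊕ Fin k)) (v : α → M) (w : Fin k → M) :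
    (ltFm t u).Realize v w ↔ t.realize (Sum.elim v w) < u.realize (Sum.elim v w) := by
  unfold ltFm
  show Structure.RelMap _ _ ↔ Structure.RelMap _ _
  refine iff_of_eq (congrArg _ (funext fun i => ?_))
  match i with
  | 0 => rfl
  | 1 => rfl

theorem realize_lift {α : Type} {k : ℕ} (t : lang.Term (α ⊕ Fin k)) (v : α → M) (w : Fin k → M)
    (y : M) : (t.liftAt 1 k).realize (Sum.elim v (sn w y)) = t.realize (Sum.elim v w) := by
  rw [Term.realize_liftAt]
  congr 1
  funext x
  rcases x with x | i
  · rfl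
  · simp [sn]
    have : Fin.castAdd 1 i = i.castSucc := rfl
    rw [this, Fin.snoc_castSucc]

theorem realize_bdAll {α : Type} {k : ℕ} (t : lang.Term (α ⊕ Fin k))
    (φ : lang.BoundedFormula α (k + 1)) (v : α → M) (w : Fin k → M) :
    (BoundedFormula.all ((ltFm (Term.var (Sum.inr (Fin.last k))) (t.liftAt 1 k)).imp φ)).Realize v w
     ↔ ∀ y, y < t.realize (Sum.elim v w) → φ.Realize v (sn w y) := by
  simp only [BoundedFormula.realize_all, BoundedFormula.realize_imp, realize_ltFm, realize_lift,
    Term.realize_var, Sum.elim_inr, Fin.snoc_last]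

theorem d0_of_delta0 {α : Type} {k : ℕ} {φ : lang.BoundedFormula α k} (h : IsDelta0 k φ) :
    ∀ {j : ℕ} (f : α → (Fin j → M) → M)
    (g : (Fin j → M) → Fin k → M), (∀ b, Tm j (f b)) → (∀ i, Tm j (fun v => g v i)) →
    D0 j (fun v => φ.Realize (fun b => f b v) (g v)) := by
  induction h with
  | falsum k => intro j f g hf hg; exact D0.falsum _
  | equal k t u =>
    intro j f g hf hg
    exact (D0.eq (tm_of_term' t f g hf hg) (tm_of_term' u f g hf hg))
  | rel k l R ts =>
    intro j f g hf hg
    cases R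
    refine (D0.lt (tm_of_term' (ts 0) f g hf hg) (tm_of_term' (ts 1) f g hf hg)).congr fun v => ?_
    show Structure.RelMap _ _ ↔ Structure.RelMap _ _
    refine iff_of_eq (congrArg _ (funext fun i => ?_))
    match i with
    | 0 => rfl
    | 1 => rfl
  | imp k _ _ h1 h2 =>
    intro j f g hf hg
    exact D0.imp (h1 f g hf hg) (h2 f g hf hg)
  | bdAll k t _ ih =>
    intro j f g hf hg
    refine (D0.ball (tm_of_term' t f g hf hg) (ih (fun b w => f b (Fin.init w))
      (fun w => sn (g (Fin.init w)) (w (Fin.last j)))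
      (fun b => (hf b).subst _ (Tm.init Tm.id))
      (Tm.sn (fun i => (hg i).subst _ (Tm.init Tm.id)) (Tm.var _ _)))).congr fun v => ?_
    rw [realize_bdAll]
    simp only [sn, Fin.init_snoc, Fin.snoc_last]

theorem s_of_sigma (hM : PAm M) {n : ℕ} (hI : ISem M n) {α : Type} {m k : ℕ}
    {φ : lang.BoundedFormula α k} (h : SigmaFm m k φ) : m ≤ n + 1 →
    ∀ {j : ℕ} (f : α → (Fin j → M) → M)
    (g : (Fin j → M) → Fin k → M), (∀ b, Tm j (f b)) → (∀ i, Tm j (fun v => g v i)) →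
    S m (fun v => φ.Realize (fun b => f b v) (g v)) := by
  refine SigmaFm.rec
    (motive_1 := fun m k φ _ => m ≤ n + 1 →
      ∀ {j : ℕ} (f : α → (Fin j → M) → M)
      (g : (Fin j → M) → Fin k → M), (∀ b, Tm j (f b)) → (∀ i, Tm j (fun v => g v i)) →
      S m (fun v => φ.Realize (fun b => f b v) (g v)))
    (motive_2 := fun m k φ _ => m ≤ n + 1 →
      ∀ {j : ℕ} (f : α → (Fin j → M) → M)
      (g : (Fin j → M) → Fin k → M), (∀ b, Tm j (f b)) → (∀ i, Tm j (fun v => g v i)) →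
      S m (fun v => ¬ φ.Realize (fun b => f b v) (g v)))
    ?_ ?_ ?_ ?_ ?_ ?_ h
  · intro m k φ h _ j f g hf hg
    exact S.mono (Nat.zero_le _) (m := 0) (d0_of_delta0 h f g hf hg)
  · intro m k φ h ih hm j f g hf hg
    exact (S.neg (ih (by omega) f g hf hg)).congr fun v => not_not.symm
  · intro m k φ h ih hm j f g hf hg
    refine S.congr (ex_le hM hI m (by omega) (R := fun v y => φ.Realize (fun b => f b v)
      (sn (g v) y)) (ih hm (fun b w => f b (Fin.init w))
        (fun w => sn (g (Fin.init w)) (w (Fin.last j)))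
      (fun b => (hf b).subst _ (Tm.init Tm.id))
      (Tm.sn (fun i => (hg i).subst _ (Tm.init Tm.id)) (Tm.var _ _)))) fun v => ?_
    rw [BoundedFormula.realize_ex]
  · intro m k φ h _ j f g hf hg
    exact S.mono (Nat.zero_le _) (m := 0) (d0_of_delta0 h f g hf hg).not
  · intro m k φ h ih hm j f g hf hg
    exact (S.neg (ih (by omega) f g hf hg))
  · intro m k φ h ih hm j f g hf hg
    refine S.congr (ex_le hM hI m (by omega) (R := fun v y => ¬ φ.Realize (fun b => f b v)
      (sn (g v) y)) (ih hm (fun b w => f b (Fin.init w))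
        (fun w => sn (g (Fin.init w)) (w (Fin.last j)))
      (fun b => (hf b).subst _ (Tm.init Tm.id))
      (Tm.sn (fun i => (hg i).subst _ (Tm.init Tm.id)) (Tm.var _ _)))) fun v => ?_
    rw [BoundedFormula.realize_all, not_forall]

theorem s_of_sigmaDef (hM : PAm M) {n : ℕ} (hI : ISem M n) {m k : ℕ} (hm : m ≤ n + 1)
    {R : (Fin k → M) → Prop} (h : IsSigmaDef m M R) : S m R := by
  obtain ⟨p, φ, w, hφ, e⟩ := h
  refine (s_of_sigma hM hI hφ hm (j := k) (fun b v => Sum.elim v w b) (fun _ => finZeroElim) ?_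
    (fun i => i.elim0)).congr e
  rintro (i | i)
  · exact Tm.var _ _
  · exact Tm.const _ _

/-- Every coordinate and parameter is available as a variable. -/
def Avail {Γ α : Type} {j : ℕ} (ρ : Γ → α → M) (σ : Γ → Fin j → M) (f : Γ → M) : Prop :=
  ∃ x : α ⊕ Fin j, ∀ γ, f γ = Sum.elim (ρ γ) (σ γ) x

theorem Avail.lift {Γ α : Type} {j : ℕ} {ρ : Γ → α → M} {σ : Γ → Fin j → M} {f : Γ → M}
    (h : Avail ρ σ f) : Avail (Γ := Γ × M) (fun γ => ρ γ.1) (fun γ => sn (σ γ.1) γ.2)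
      (fun γ => f γ.1) := by
  obtain ⟨x | i, h⟩ := h
  · exact ⟨Sum.inl x, fun γ => h γ.1⟩
  · exact ⟨Sum.inr i.castSucc, fun γ => by simpa using h γ.1⟩

theorem avail_sn {Γ α : Type} {j k : ℕ} {ρ : Γ → α → M} {σ : Γ → Fin j → M} {V : Γ → Fin k → M}
    (h : ∀ i, Avail ρ σ (fun γ => V γ i)) : ∀ i,
    Avail (Γ := Γ × M) (fun γ => ρ γ.1) (fun γ => sn (σ γ.1) γ.2)
      (fun γ => sn (V γ.1) γ.2 i) := by
  intro i
  refine Fin.lastCases ?_ (fun i => ?_) i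
  · exact ⟨Sum.inr (Fin.last _), fun γ => by simp⟩
  · simpa using (h i).lift

theorem term_of_tm {k : ℕ} {t : (Fin k → M) → M} (h : Tm k t) : ∃ s : List M,
    ∀ {Γ α : Type} {j : ℕ} (ρ : Γ → α → M) (σ : Γ → Fin j → M) (V : Γ → Fin k → M),
      (∀ i, Avail ρ σ (fun γ => V γ i)) → (∀ c ∈ s, Avail ρ σ (fun _ => c)) →
      ∃ τ : lang.Term (α ⊕ Fin j), ∀ γ, t (V γ) = τ.realize (Sum.elim (ρ γ) (σ γ)) := by
  induction h with
  | var i =>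
    refine ⟨[], fun {Γ α j} ρ σ V hV _ => ?_⟩
    obtain ⟨x, hx⟩ := hV i
    exact ⟨Term.var x, hx⟩
  | const c =>
    refine ⟨[c], fun {Γ α j} ρ σ V hV hs => ?_⟩
    obtain ⟨x, hx⟩ := hs c (by simp)
    exact ⟨Term.var x, hx⟩
  | add _ _ h1 h2 =>
    obtain ⟨s1, h1⟩ := h1
    obtain ⟨s2, h2⟩ := h2
    refine ⟨s1 ++ s2, fun {Γ α j} ρ σ V hV hs => ?_⟩
    obtain ⟨τ1, e1⟩ := h1 ρ σ V hV (fun c hc => hs c (by simp [hc]))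
    obtain ⟨τ2, e2⟩ := h2 ρ σ V hV (fun c hc => hs c (by simp [hc]))
    refine ⟨Term.func (L := lang) (l := 2) Func.add ![τ1, τ2], fun γ => ?_⟩
    beta_reduce
    rw [e1, e2]
    simp only [Term.realize]
    refine congrArg (Structure.funMap (L := lang) Func.add) (funext fun i => ?_)
    match i with
    | 0 => rfl
    | 1 => rfl
  | mul _ _ h1 h2 =>
    obtain ⟨s1, h1⟩ := h1
    obtain ⟨s2, h2⟩ := h2
    refine ⟨s1 ++ s2, fun {Γ α j} ρ σ V hV hs => ?_⟩
    obtain ⟨τ1, e1⟩ := h1 ρ σ V hV (fun c hc => hs c (by simp [hc]))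
    obtain ⟨τ2, e2⟩ := h2 ρ σ V hV (fun c hc => hs c (by simp [hc]))
    refine ⟨Term.func (L := lang) (l := 2) Func.mul ![τ1, τ2], fun γ => ?_⟩
    beta_reduce
    rw [e1, e2]
    simp only [Term.realize]
    refine congrArg (Structure.funMap (L := lang) Func.mul) (funext fun i => ?_)
    match i with
    | 0 => rfl
    | 1 => rfl

theorem delta0_of_d0 {k : ℕ} {R : (Fin k → M) → Prop} (h : D0 k R) : ∃ s : List M,
    ∀ {Γ α : Type} {j : ℕ} (ρ : Γ → α → M) (σ : Γ → Fin j → M) (V : Γ → Fin k → M),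
      (∀ i, Avail ρ σ (fun γ => V γ i)) → (∀ c ∈ s, Avail ρ σ (fun _ => c)) →
      ∃ φ : lang.BoundedFormula α j, IsDelta0 j φ ∧ ∀ γ, R (V γ) ↔ φ.Realize (ρ γ) (σ γ) := by
  induction h with
  | falsum k =>
    exact ⟨[], fun {Γ α j} ρ σ V hV _ => ⟨_, IsDelta0.falsum j, fun γ => Iff.rfl⟩⟩
  | eq h1 h2 =>
    obtain ⟨s1, h1⟩ := term_of_tm h1
    obtain ⟨s2, h2⟩ := term_of_tm h2
    refine ⟨s1 ++ s2, fun {Γ α j} ρ σ V hV hs => ?_⟩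
    obtain ⟨τ1, e1⟩ := h1 ρ σ V hV (fun c hc => hs c (by simp [hc]))
    obtain ⟨τ2, e2⟩ := h2 ρ σ V hV (fun c hc => hs c (by simp [hc]))
    refine ⟨_, IsDelta0.equal j τ1 τ2, fun γ => ?_⟩
    beta_reduce
    rw [e1, e2]; rfl
  | lt h1 h2 =>
    obtain ⟨s1, h1⟩ := term_of_tm h1
    obtain ⟨s2, h2⟩ := term_of_tm h2
    refine ⟨s1 ++ s2, fun {Γ α j} ρ σ V hV hs => ?_⟩
    obtain ⟨τ1, e1⟩ := h1 ρ σ V hV (fun c hc => hs c (by simp [hc]))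
    obtain ⟨τ2, e2⟩ := h2 ρ σ V hV (fun c hc => hs c (by simp [hc]))
    refine ⟨ltFm τ1 τ2, IsDelta0.rel j 2 _ _, fun γ => ?_⟩
    beta_reduce
    rw [e1, e2, realize_ltFm]
  | imp _ _ h1 h2 =>
    obtain ⟨s1, h1⟩ := h1
    obtain ⟨s2, h2⟩ := h2
    refine ⟨s1 ++ s2, fun {Γ α j} ρ σ V hV hs => ?_⟩
    obtain ⟨τ1, d1, e1⟩ := h1 ρ σ V hV (fun c hc => hs c (by simp [hc]))
    obtain ⟨τ2, d2, e2⟩ := h2 ρ σ V hV (fun c hc => hs c (by simp [hc]))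
    refine ⟨_, IsDelta0.imp j d1 d2, fun γ => ?_⟩
    beta_reduce
    rw [e1, e2]; rfl
  | ball h1 _ h2 =>
    obtain ⟨s1, h1⟩ := term_of_tm h1
    obtain ⟨s2, h2⟩ := h2
    refine ⟨s1 ++ s2, fun {Γ α j} ρ σ V hV hs => ?_⟩
    obtain ⟨τ1, e1⟩ := h1 ρ σ V hV (fun c hc => hs c (by simp [hc]))
    obtain ⟨φ, d2, e2⟩ := h2 (Γ := Γ × M) (fun γ => ρ γ.1) (fun γ => sn (σ γ.1) γ.2)
      (fun γ => sn (V γ.1) γ.2) (avail_sn hV) (fun c hc => (hs c (by simp [hc])).lift)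
    refine ⟨_, IsDelta0.bdAll j τ1 d2, fun γ => ?_⟩
    beta_reduce
    rw [realize_bdAll, e1]
    exact forall_congr' fun y => imp_congr_right fun _ => e2 (γ, y)

theorem sigma_of_s {m k : ℕ} {R : (Fin k → M) → Prop} (h : S m R) : ∃ s : List M,
    ∀ {Γ α : Type} {j : ℕ} (ρ : Γ → α → M) (σ : Γ → Fin j → M) (V : Γ → Fin k → M),
      (∀ i, Avail ρ σ (fun γ => V γ i)) → (∀ c ∈ s, Avail ρ σ (fun _ => c)) →
      (∃ φ : lang.BoundedFormula α j, SigmaFm m j φ ∧ ∀ γ, R (V γ) ↔ φ.Realize (ρ γ) (σ γ)) ∧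
      (∃ φ : lang.BoundedFormula α j, PiFm m j φ ∧ ∀ γ, ¬ R (V γ) ↔ φ.Realize (ρ γ) (σ γ)) := by
  induction m generalizing k with
  | zero =>
    obtain ⟨s, hs⟩ := delta0_of_d0 h
    obtain ⟨s', hs'⟩ := delta0_of_d0 (D0.not h)
    refine ⟨s ++ s', fun {Γ α j} ρ σ V hV hc => ⟨?_, ?_⟩⟩
    · obtain ⟨φ, d, e⟩ := hs ρ σ V hV (fun c h => hc c (by simp [h]))
      exact ⟨φ, SigmaFm.delta0 _ _ d, e⟩
    · obtain ⟨φ, d, e⟩ := hs' ρ σ V hV (fun c h => hc c (by simp [h]))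
      exact ⟨φ, PiFm.delta0 _ _ d, e⟩
  | succ m ih =>
    obtain ⟨P, hP, e⟩ := h
    obtain ⟨s, hs⟩ := ih hP
    refine ⟨s, fun {Γ α j} ρ σ V hV hc => ?_⟩
    obtain ⟨⟨φ, d, e1⟩, ⟨ψ, d', e2⟩⟩ := hs (Γ := Γ × M) (fun γ => ρ γ.1) (fun γ => sn (σ γ.1) γ.2)
      (fun γ => sn (V γ.1) γ.2) (avail_sn hV) (fun c h => (hc c h).lift)
    refine ⟨⟨ψ.ex, SigmaFm.ex _ _ (SigmaFm.ofPi _ _ d'), fun γ => ?_⟩,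
      ⟨φ.all, PiFm.all _ _ (PiFm.ofSigma _ _ d), fun γ => ?_⟩⟩
    · rw [e, BoundedFormula.realize_ex]
      exact exists_congr fun y => e2 (γ, y)
    · rw [e, BoundedFormula.realize_all]
      push Not
      exact forall_congr' fun y => e1 (γ, y)

theorem sigmaDef_of_s {m k : ℕ} {R : (Fin k → M) → Prop} (h : S m R) : IsSigmaDef m M R := by
  obtain ⟨s, hs⟩ := sigma_of_s h
  obtain ⟨⟨φ, d, e⟩, -⟩ := hs (Γ := Fin k → M) (α := Fin k ⊕ Fin s.length) (j := 0)
    (fun v => Sum.elim v s.get) (fun _ => finZeroElim) (fun v => v)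
    (fun i => ⟨Sum.inl (Sum.inl i), fun _ => rfl⟩) (fun c hc => by
      obtain ⟨i, rfl⟩ := List.get_of_mem hc
      exact ⟨Sum.inl (Sum.inr i), fun _ => rfl⟩)
  exact ⟨_, φ, s.get, d, e⟩

theorem isem_of_isig {n : ℕ} (h : ISig n M) : ISem M n :=
  fun A hA => h A (sigmaDef_of_s hA)

theorem isig_of_isem (hM : PAm M) {n : ℕ} (h : ISem M n) : ISig n M :=
  fun A hA => h A (s_of_sigmaDef hM h (by omega) hA)

theorem s_lt {k m : ℕ} {t u : (Fin k → M) → M} (ht : Tm k t) (hu : Tm k u) :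
    S m (fun v => t v < u v) := S.mono (Nat.zero_le _) (m := 0) (D0.lt ht hu)

theorem s_eq {k m : ℕ} {t u : (Fin k → M) → M} (ht : Tm k t) (hu : Tm k u) :
    S m (fun v => t v = u v) := S.mono (Nat.zero_le _) (m := 0) (D0.eq ht hu)

theorem PAm.zero_mul (hM : PAm M) (x : M) : 0 * x = 0 := by rw [hM.mul_comm, hM.mul_zero]

theorem PAm.mul_le (hM : PAm M) {u x : M} (y : M) (h : u < x ∨ u = x) :
    u * y < x * y ∨ u * y = x * y := by
  rcases h with h | rfl
  · rcases hM.zero_le y with h0 | h0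
    · exact Or.inl (hM.mul_lt_mul _ _ _ h h0)
    · right; rw [← h0, hM.mul_zero, hM.mul_zero]
  · exact Or.inr rfl

theorem PAm.add_lt_left (hM : PAm M) {u v : M} (x : M) (h : u < v) : x + u < x + v := by
  rw [hM.add_comm x, hM.add_comm x]; exact hM.add_lt_add _ _ _ h

theorem PAm.le_lt (hM : PAm M) {u v w : M} (h : u < v) (h' : v < w ∨ v = w) : u < w := by
  rcases h' with h' | rfl
  · exact hM.lt_trans _ _ _ h h'
  · exact h

theorem PAm.succ_le (hM : PAm M) {u x : M} (h : u < x) : u + 1 < x ∨ u + 1 = x := by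
  rcases hM.lt_total (u + 1) x with h' | h' | h'
  · exact Or.inl h'
  · exact Or.inr h'
  · rcases (hM.lt_succ_iff _ _).1 h' with h' | rfl
    · exact absurd (hM.lt_trans _ _ _ h h') (hM.lt_irrefl _)
    · exact absurd h (hM.lt_irrefl _)

theorem PAm.grid_lt' (hM : PAm M) {u u' v x : M} (hu : u < u') (hv : v < x) :
    u * x + v < u' * x := by
  have h1 : u * x + v < (u + 1) * x := by
    rw [hM.mul_comm (u + 1), hM.ldistrib, hM.mul_one, hM.mul_comm x u]
    exact hM.add_lt_left _ hv
  exact hM.le_lt h1 (hM.mul_le x (hM.succ_le hu))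

theorem PAm.add_le (hM : PAm M) (x v : M) : x < x + v ∨ x = x + v := by
  rcases hM.zero_le v with h | h
  · left
    have := hM.add_lt_left x h
    rwa [hM.add_zero] at this
  · right; rw [← h, hM.add_zero]

theorem PAm.grid_inj (hM : PAm M) {u u' v v' x : M} (hv : v < x) (hv' : v' < x)
    (h : u * x + v = u' * x + v') : u = u' := by
  rcases hM.lt_total u u' with h1 | h1 | h1
  · have := hM.le_lt (hM.grid_lt' h1 hv) (hM.add_le (u' * x) v')
    rw [h] at this
    exact absurd this (hM.lt_irrefl _)
  · exact h1
  · have := hM.le_lt (hM.grid_lt' h1 hv') (hM.add_le (u * x) v)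
    rw [h] at this
    exact absurd this (hM.lt_irrefl _)

theorem fair2 (hM : PAm M) {n : ℕ} (hI : ISem M n) : FairFRT1 M (n + 1) ((1 : M) + 1) := by
  intro x
  refine ⟨x * x, fun C ⟨hC, htot, hfun⟩ => ?_⟩
  have hCS := s_of_sigmaDef hM hI le_rfl hC
  have hcl := cl_le hM hI (n + 1) le_rfl
  by_cases hc : ∃ u, u < x ∧ ∀ v, v < x → C (u * x + v) 1
  · obtain ⟨u, hu, h⟩ := hc
    refine ⟨fun v z => z = u * x + v, ⟨sigmaDef_of_s ?_, ?_, ?_, ?_⟩, 1, ?_⟩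
    · exact s_eq (Tm.var _ _) (Tm.add (Tm.const _ _) (Tm.var _ _))
    · intro v hv
      exact ⟨_, hM.grid_lt' hu hv, rfl⟩
    · rintro u v v' _ rfl rfl
      rfl
    · rintro v v' z hv hv' rfl h
      rcases hM.lt_total v v' with h1 | h1 | h1
      · have := hM.add_lt_left (u * x) h1
        rw [h] at this
        exact absurd this (hM.lt_irrefl _)
      · exact h1
      · have := hM.add_lt_left (u * x) h1
        rw [h] at this
        exact absurd this (hM.lt_irrefl _)
    · rintro v z hv rfl
      exact h v hv
  · push Not at hc
    have hex : ∀ u, u < x → ∃ v, v < x ∧ C (u * x + v) 0 := by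
      intro u hu
      obtain ⟨v, hv, hnc⟩ := hc u hu
      obtain ⟨i, hi, hCi⟩ := htot (u * x + v) (hM.grid_lt' hu hv)
      refine ⟨v, hv, ?_⟩
      rcases (hM.lt_succ_iff _ _).1 hi with hi | rfl
      · rw [← hM.zero_add 1] at hi
        rcases (hM.lt_succ_iff _ _).1 hi with hi | rfl
        · exact absurd hi (hM.not_lt_zero _)
        · exact hCi
      · exact absurd hCi hnc
    obtain ⟨Q, hQ, hQR, hQf, hQt⟩ := uniformize (k := 1) hM hI
      (R := fun w z => C z 0 ∧ ∃ v, v < x ∧ z = w 0 * x + v) (hcl.and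
        (hCS.subst (fun w => ![w (Fin.last 1), 0]) (fun i => by
          match i with
          | 0 => exact Tm.var _ _
          | 1 => exact Tm.const _ _))
        (hcl.bex (R := fun (w : Fin 2 → M) v => w (Fin.last 1) = (Fin.init w : Fin 1 → M) 0 * x + v)
          (Tm.const _ x) (s_eq (Tm.var _ (Fin.last 1).castSucc)
          (Tm.add (Tm.mul (Tm.var _ (0 : Fin 3)) (Tm.const _ _)) (Tm.var _ _)))))
    refine ⟨fun u z => Q (fun _ => u) z, ⟨sigmaDef_of_s ?_, ?_, ?_, ?_⟩, 0, ?_⟩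
    · refine hQ.congr fun v => ?_
      have : (fun _ => v 0) = (Fin.init v : Fin 1 → M) := by
        funext i
        obtain rfl : i = 0 := Subsingleton.elim _ _
        rfl
      beta_reduce
      rw [this]; rfl
    · intro u hu
      obtain ⟨v, hv, h⟩ := hex u hu
      obtain ⟨z, hz⟩ := hQt (fun _ => u) ⟨u * x + v, h, v, hv, rfl⟩
      obtain ⟨_, v', hv', rfl⟩ := hQR _ _ hz
      exact ⟨_, hM.grid_lt' hu hv', hz⟩
    · intro u v v' _ h h'
      exact hQf _ _ _ h h'
    · intro u u' z _ _ h h'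
      obtain ⟨_, v, hv, e⟩ := hQR _ _ h
      obtain ⟨_, v', hv', e'⟩ := hQR _ _ h'
      exact hM.grid_inj hv hv' (e.symm.trans e')
    · intro u v _ h
      exact (hQR _ _ h).1

end Trans
end ArithFC

namespace ArithFC

section NatApi

/-- The standard model, kept as a definition to avoid instance clashes. -/
@[reducible] def natStr : lang.Structure ℕ where
  funMap := fun {k} (f : Func k) =>
    match f with
    | Func.zero => fun _ => 0
    | Func.one => fun _ => 1
    | Func.add => fun v => v 0 + v 1
    | Func.mul => fun v => v 0 * v 1
  RelMap := fun {k} (r : Rel k) =>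
    match r with
    | Rel.lt => fun v => v 0 < v 1

/-- Σ_m relations over the standard model. -/
def SN (m : ℕ) {k : ℕ} (R : (Fin k → ℕ) → Prop) : Prop := @S ℕ natStr m k R
/-- Polynomials over the standard model. -/
def TN (k : ℕ) (t : (Fin k → ℕ) → ℕ) : Prop := @Tm ℕ natStr k t

theorem TN.var {k : ℕ} (i : Fin k) : TN k (fun v => v i) := @Tm.var ℕ natStr k i
theorem TN.const {k : ℕ} (c : ℕ) : TN k (fun _ => c) := @Tm.const ℕ natStr k c
theorem TN.add {k : ℕ} {t u : (Fin k → ℕ) → ℕ} (h : TN k t) (h' : TN k u) :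
    TN k (fun v => t v + u v) := @Tm.add ℕ natStr k t u h h'
theorem TN.mul {k : ℕ} {t u : (Fin k → ℕ) → ℕ} (h : TN k t) (h' : TN k u) :
    TN k (fun v => t v * u v) := @Tm.mul ℕ natStr k t u h h'
theorem TN.subst {k j : ℕ} {t : (Fin k → ℕ) → ℕ} (ht : TN k t) (G : (Fin j → ℕ) → Fin k → ℕ)
    (hG : ∀ i, TN j (fun v => G v i)) : TN j (fun v => t (G v)) :=
  @Tm.subst ℕ natStr k j t ht G hG
theorem TN.sn {k j : ℕ} {G : (Fin j → ℕ) → Fin k → ℕ} (hG : ∀ i, TN j (fun v => G v i))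
    {t : (Fin j → ℕ) → ℕ} (ht : TN j t) : ∀ i, TN j (fun v => sn (G v) (t v) i) :=
  @Tm.sn ℕ natStr k j G hG t ht
theorem TN.init {k j : ℕ} {G : (Fin j → ℕ) → Fin (k + 1) → ℕ} (hG : ∀ i, TN j (fun v => G v i)) :
    ∀ i : Fin k, TN j (fun v => Fin.init (G v) i) := fun i => hG i.castSucc
theorem TN.id {k : ℕ} : ∀ i : Fin k, TN k (fun v => v i) := fun i => TN.var i
theorem TN.up {k : ℕ} {t : (Fin k → ℕ) → ℕ} (ht : TN k t) :
    TN (k + 1) (fun v => t (Fin.init v)) := ht.subst _ (TN.init TN.id)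

theorem nat_pam : @PAm ℕ natStr := by
  refine @PAm.mk ℕ natStr ?_ ?_ ?_ ?_ ?_ ?_ ?_ ?_ ?_ ?_ ?_ ?_ ?_ ?_ ?_ ?_ ?_
  · exact fun x y z => Nat.add_assoc x y z
  · exact fun x y => Nat.add_comm x y
  · exact fun x y z => Nat.mul_assoc x y z
  · exact fun x y => Nat.mul_comm x y
  · exact fun x y z => Nat.mul_add x y z
  · exact fun x => Nat.add_zero x
  · exact fun x => Nat.mul_zero x
  · exact fun x => Nat.mul_one x
  · exact fun x y z (h : Nat.lt x y) (h' : Nat.lt y z) => Nat.lt_trans h h'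
  · exact fun x => Nat.lt_irrefl x
  · exact fun x y => Nat.lt_trichotomy x y
  · exact fun x y z (h : Nat.lt x y) => Nat.add_lt_add_right h z
  · exact fun x y z (h : Nat.lt x y) (h' : Nat.lt 0 z) => Nat.mul_lt_mul_of_pos_right h h'
  · exact fun x y (h : Nat.lt x y) => ⟨Nat.sub y x, Nat.add_sub_of_le (Nat.le_of_lt h)⟩
  · exact Nat.zero_lt_one
  · exact fun x (h : Nat.lt 0 x) => (Nat.lt_or_eq_of_le h : Nat.lt 1 x ∨ 1 = x)
  · exact fun x => (Nat.lt_or_eq_of_le (Nat.zero_le x) : Nat.lt 0 x ∨ 0 = x)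

theorem nat_isem (m : ℕ) : @ISem ℕ natStr m := by
  intro A _ h0 hs x
  induction x with
  | zero => exact h0
  | succ x ih => exact hs x ih

variable {m k j : ℕ}

theorem SN.congr {R Q : (Fin k → ℕ) → Prop} (h : SN m R) (e : ∀ v, Q v ↔ R v) : SN m Q :=
  @S.congr ℕ natStr m k R Q h e
theorem SN.subst {R : (Fin k → ℕ) → Prop} (hR : SN m R) (G : (Fin j → ℕ) → Fin k → ℕ)
    (hG : ∀ i, TN j (fun v => G v i)) : SN m (fun v => R (G v)) :=
  @S.subst ℕ natStr m k j R hR G hG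
theorem SN.lt {t u : (Fin k → ℕ) → ℕ} (ht : TN k t) (hu : TN k u) :
    SN m (fun v => t v < u v) := @s_lt ℕ natStr k m t u ht hu
theorem SN.eq {t u : (Fin k → ℕ) → ℕ} (ht : TN k t) (hu : TN k u) :
    SN m (fun v => t v = u v) := @s_eq ℕ natStr k m t u ht hu
theorem SN.neg {R : (Fin k → ℕ) → Prop} (h : SN m R) : SN (m + 1) (fun v => ¬ R v) :=
  @S.neg ℕ natStr m k R h
theorem SN.up {R : (Fin k → ℕ) → Prop} (h : SN m R) : SN (m + 1) R := @S.up ℕ natStr m k R h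
theorem SN.mono {m' : ℕ} (hm : m ≤ m') {R : (Fin k → ℕ) → Prop} (h : SN m R) : SN m' R :=
  @S.mono ℕ natStr m m' k hm R h
theorem SN.and {R Q : (Fin k → ℕ) → Prop} (h : SN m R) (h' : SN m Q) :
    SN m (fun v => R v ∧ Q v) :=
  @Cl.and ℕ natStr m (@cl_le ℕ natStr nat_pam m (nat_isem m) m (by omega)) _ _ _ h h'
theorem SN.or {R Q : (Fin k → ℕ) → Prop} (h : SN m R) (h' : SN m Q) :
    SN m (fun v => R v ∨ Q v) :=
  @Cl.or ℕ natStr m (@cl_le ℕ natStr nat_pam m (nat_isem m) m (by omega)) _ _ _ h h'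
theorem SN.bex {t : (Fin k → ℕ) → ℕ} {R : (Fin k → ℕ) → ℕ → Prop} (ht : TN k t)
    (h : SN m (fun w : Fin (k + 1) → ℕ => R (Fin.init w) (w (Fin.last k)))) :
    SN m (fun v => ∃ y, y < t v ∧ R v y) :=
  @Cl.bex ℕ natStr m (@cl_le ℕ natStr nat_pam m (nat_isem m) m (by omega)) _ _ _ ht h
theorem SN.ball {t : (Fin k → ℕ) → ℕ} {R : (Fin k → ℕ) → ℕ → Prop} (ht : TN k t)
    (h : SN m (fun w : Fin (k + 1) → ℕ => R (Fin.init w) (w (Fin.last k)))) :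
    SN m (fun v => ∀ y, y < t v → R v y) :=
  (@cl_all ℕ natStr nat_pam m (nat_isem m) m le_rfl).2 ht h
theorem SN.ex {R : (Fin k → ℕ) → ℕ → Prop}
    (h : SN (m + 1) (fun w : Fin (k + 1) → ℕ => R (Fin.init w) (w (Fin.last k)))) :
    SN (m + 1) (fun v => ∃ y, R v y) :=
  @ex_le ℕ natStr nat_pam m (nat_isem m) m le_rfl _ _ h
theorem SN.cases {R : (Fin k → ℕ) → Prop} (h : SN (m + 1) R) :
    ∃ P : (Fin (k + 1) → ℕ) → Prop, SN m P ∧ ∀ v, R v ↔ ∃ y, ¬ P (sn v y) := h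
theorem SN.unif {R : (Fin k → ℕ) → ℕ → Prop}
    (hR : SN (m + 1) (fun w : Fin (k + 1) → ℕ => R (Fin.init w) (w (Fin.last k)))) :
    ∃ Q : (Fin k → ℕ) → ℕ → Prop,
      SN (m + 1) (fun w : Fin (k + 1) → ℕ => Q (Fin.init w) (w (Fin.last k))) ∧
      (∀ v y, Q v y → R v y) ∧ (∀ v y y', Q v y → Q v y' → y = y') ∧
      (∀ v, (∃ y, R v y) → ∃ y, Q v y) :=
  @uniformize ℕ natStr nat_pam m k (nat_isem m) R hR

/-- Relational composition. -/
theorem SN.relcomp {q : ℕ} {G : Fin q → (Fin k → ℕ) → ℕ → Prop}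
    (hG : ∀ i, SN (m + 1) (fun w : Fin (k + 1) → ℕ => G i (Fin.init w) (w (Fin.last k))))
    {R : (Fin k → ℕ) → (Fin q → ℕ) → Prop}
    (hR : ∀ {j : ℕ} (A : (Fin j → ℕ) → Fin k → ℕ) (B : (Fin j → ℕ) → Fin q → ℕ),
      (∀ i, TN j (fun v => A v i)) → (∀ i, TN j (fun v => B v i)) →
      SN (m + 1) (fun w => R (A w) (B w))) :
    SN (m + 1) (fun v => ∃ u : Fin q → ℕ, (∀ i, G i v (u i)) ∧ R v u) := by
  induction q with
  | zero =>
    refine (hR (fun v => v) (fun _ => finZeroElim) TN.id (fun i => i.elim0)).congr fun v => ?_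
    constructor
    · rintro ⟨u, _, h⟩
      rwa [Subsingleton.elim finZeroElim u]
    · exact fun h => ⟨_, fun i => i.elim0, h⟩
  | succ q ih =>
    refine (ih (G := fun i => G i.castSucc) (fun i => hG _)
      (R := fun v u => ∃ y, G (Fin.last q) v y ∧ R v (sn u y)) ?_).congr fun v => ?_
    · intro j A B hA hB
      refine SN.ex (SN.and ?_ ?_)
      · have := (hG (Fin.last q)).subst (fun w : Fin (j + 1) → ℕ => sn (A (Fin.init w))
          (w (Fin.last j))) (TN.sn (fun i => (hA i).up) (TN.var _))
        exact this.congr fun w => by simp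
      · exact hR _ _ (fun i => (hA i).up) (TN.sn (fun i => (hB i).up) (TN.var _))
    · constructor
      · rintro ⟨u, h1, h2⟩
        refine ⟨Fin.init u, fun i => h1 _, u (Fin.last q), h1 _, ?_⟩
        simpa using h2
      · rintro ⟨u, h1, y, h2, h3⟩
        refine ⟨sn u y, fun i => ?_, h3⟩
        refine Fin.lastCases ?_ (fun i => ?_) i
        · simpa using h2
        · simpa using h1 i

/-- Functions with Σ_m graph. -/
def FN (m : ℕ) {k : ℕ} (f : (Fin k → ℕ) → ℕ) : Prop :=
  SN m (fun w : Fin (k + 1) → ℕ => f (Fin.init w) = w (Fin.last k))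

theorem FN.mono {m' : ℕ} (hm : m ≤ m') {f : (Fin k → ℕ) → ℕ} (h : FN m f) : FN m' f :=
  SN.mono hm h

theorem TN.fn {t : (Fin k → ℕ) → ℕ} (h : TN k t) : FN m t := SN.eq h.up (TN.var _)

theorem SN.app {q : ℕ} {R : (Fin q → ℕ) → Prop} (hR : SN (m + 1) R)
    {f : Fin q → (Fin k → ℕ) → ℕ} (hf : ∀ i, FN (m + 1) (f i)) :
    SN (m + 1) (fun v => R (fun i => f i v)) := by
  refine (SN.relcomp (G := fun i v y => f i v = y) hf (R := fun _ u => R u)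
    (fun A B hA hB => hR.subst _ hB)).congr fun v => ?_
  constructor
  · exact fun h => ⟨_, fun i => rfl, h⟩
  · rintro ⟨u, h, h'⟩
    rwa [show (fun i => f i v) = u from funext h]

theorem SN.app1 {R : ℕ → Prop} (hR : SN (m + 1) (fun v : Fin 1 → ℕ => R (v 0)))
    {f : (Fin k → ℕ) → ℕ} (hf : FN (m + 1) f) : SN (m + 1) (fun v => R (f v)) :=
  SN.app hR (f := ![f]) (fun i => by match i with | 0 => exact hf)

theorem SN.app2 {R : ℕ → ℕ → Prop} (hR : SN (m + 1) (fun v : Fin 2 → ℕ => R (v 0) (v 1)))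
    {f g : (Fin k → ℕ) → ℕ} (hf : FN (m + 1) f) (hg : FN (m + 1) g) :
    SN (m + 1) (fun v => R (f v) (g v)) :=
  SN.app hR (f := ![f, g]) (fun i => by match i with | 0 => exact hf | 1 => exact hg)

theorem SN.app3 {R : ℕ → ℕ → ℕ → Prop}
    (hR : SN (m + 1) (fun v : Fin 3 → ℕ => R (v 0) (v 1) (v 2)))
    {f g h : (Fin k → ℕ) → ℕ} (hf : FN (m + 1) f) (hg : FN (m + 1) g) (hh : FN (m + 1) h) :
    SN (m + 1) (fun v => R (f v) (g v) (h v)) :=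
  SN.app hR (f := ![f, g, h])
    (fun i => by match i with | 0 => exact hf | 1 => exact hg | 2 => exact hh)

theorem FN.up {f : (Fin k → ℕ) → ℕ} (hf : FN m f) :
    FN m (fun v : Fin (k + 1) → ℕ => f (Fin.init v)) :=
  (SN.subst hf (fun w : Fin (k + 2) → ℕ => sn (Fin.init (Fin.init w)) (w (Fin.last (k+1))))
    (TN.sn (TN.init (TN.init TN.id)) (TN.var _))).congr fun v => by simp

theorem FN.app1 {F : ℕ → ℕ} (hF : FN (m + 1) (fun v : Fin 1 → ℕ => F (v 0)))
    {f : (Fin k → ℕ) → ℕ} (hf : FN (m + 1) f) : FN (m + 1) (fun v => F (f v)) :=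
  SN.app2 (R := fun x y => F x = y) hF hf.up (TN.var _).fn

theorem FN.app2 {F : ℕ → ℕ → ℕ} (hF : FN (m + 1) (fun v : Fin 2 → ℕ => F (v 0) (v 1)))
    {f g : (Fin k → ℕ) → ℕ} (hf : FN (m + 1) f) (hg : FN (m + 1) g) :
    FN (m + 1) (fun v => F (f v) (g v)) :=
  SN.app3 (R := fun x x' y => F x x' = y) hF hf.up hg.up (TN.var _).fn

theorem FN.app3 {F : ℕ → ℕ → ℕ → ℕ} (hF : FN (m + 1) (fun v : Fin 3 → ℕ => F (v 0) (v 1) (v 2)))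
    {f g h : (Fin k → ℕ) → ℕ} (hf : FN (m + 1) f) (hg : FN (m + 1) g) (hh : FN (m + 1) h) :
    FN (m + 1) (fun v => F (f v) (g v) (h v)) :=
  SN.app (R := fun w : Fin 4 → ℕ => F (w 0) (w 1) (w 2) = w 3) hF
    (f := ![fun v => f (Fin.init v), fun v => g (Fin.init v), fun v => h (Fin.init v),
      fun v => v (Fin.last k)])
    (fun i => by
      match i with
      | 0 => exact hf.up
      | 1 => exact hg.up
      | 2 => exact hh.up
      | 3 => exact (TN.var _).fn)

end NatApi
end ArithFC

namespace ArithFC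

section Rec
variable {m k j : ℕ}

theorem FN.var (i : Fin k) : FN m (fun v => v i) := (TN.var i).fn
theorem FN.const (c : ℕ) : FN m (fun _ : Fin k → ℕ => c) := (TN.const c).fn

theorem SN.feq {f g : (Fin k → ℕ) → ℕ} (hf : FN (m + 1) f) (hg : FN (m + 1) g) :
    SN (m + 1) (fun v => f v = g v) :=
  SN.app2 (R := fun x y => x = y) (SN.eq (TN.var _) (TN.var _)) hf hg

theorem SN.flt {f g : (Fin k → ℕ) → ℕ} (hf : FN (m + 1) f) (hg : FN (m + 1) g) :
    SN (m + 1) (fun v => f v < g v) :=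
  SN.app2 (R := fun x y => x < y) (SN.lt (TN.var _) (TN.var _)) hf hg

theorem FN.succ {f : (Fin k → ℕ) → ℕ} (hf : FN (m + 1) f) : FN (m + 1) (fun v => f v + 1) :=
  FN.app1 (F := fun x => x + 1) (TN.add (TN.var _) (TN.const 1)).fn hf

theorem pair_graph : SN m (fun v : Fin 3 → ℕ => Nat.pair (v 0) (v 1) = v 2) := by
  refine SN.mono (Nat.zero_le _) (m := 0) (SN.congr (SN.or
    (SN.and (SN.lt (TN.var 0) (TN.var 1))
      (SN.eq (TN.add (TN.mul (TN.var 1) (TN.var 1)) (TN.var 0)) (TN.var 2)))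
    (SN.and (SN.lt (TN.var 1) (TN.add (TN.var 0) (TN.const 1)))
      (SN.eq (TN.add (TN.add (TN.mul (TN.var 0) (TN.var 0)) (TN.var 0)) (TN.var 1)) (TN.var 2))))
    fun v => ?_)
  unfold Nat.pair
  split_ifs with h
  · have : ¬ v 1 < v 0 + 1 := by omega
    simp [h, this]
  · have : v 1 < v 0 + 1 := by omega
    simp [h, this]

theorem FN.pair {f g : (Fin k → ℕ) → ℕ} (hf : FN (m + 1) f) (hg : FN (m + 1) g) :
    FN (m + 1) (fun v => Nat.pair (f v) (g v)) := FN.app2 (F := Nat.pair) pair_graph hf hg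

theorem FN.left {f : (Fin k → ℕ) → ℕ} (hf : FN (m + 1) f) :
    FN (m + 1) (fun v => (Nat.unpair (f v)).1) := by
  refine FN.app1 (F := fun x => (Nat.unpair x).1) ?_ hf
  refine SN.congr (SN.ex (R := fun (v : Fin 2 → ℕ) b => Nat.pair (v 1) b = v 0)
    (SN.subst (j := 3) pair_graph (fun v => ![v 1, v 2, v 0]) (fun i => by
      match i with
      | 0 => exact TN.var _
      | 1 => exact TN.var _
      | 2 => exact TN.var _))) fun v => ?_
  constructor
  · intro h
    refine ⟨(Nat.unpair (v 0)).2, ?_⟩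
    have h' : (Nat.unpair (v 0)).1 = v 1 := h
    rw [← h', Nat.pair_unpair]
  · rintro ⟨b, h⟩
    show (Nat.unpair (v 0)).1 = v 1
    rw [← h, Nat.unpair_pair]

theorem FN.right {f : (Fin k → ℕ) → ℕ} (hf : FN (m + 1) f) :
    FN (m + 1) (fun v => (Nat.unpair (f v)).2) := by
  refine FN.app1 (F := fun x => (Nat.unpair x).2) ?_ hf
  refine SN.congr (SN.ex (R := fun (v : Fin 2 → ℕ) b => Nat.pair b (v 1) = v 0)
    (SN.subst (j := 3) pair_graph (fun v => ![v 2, v 1, v 0]) (fun i => by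
      match i with
      | 0 => exact TN.var _
      | 1 => exact TN.var _
      | 2 => exact TN.var _))) fun v => ?_
  constructor
  · intro h
    refine ⟨(Nat.unpair (v 0)).1, ?_⟩
    have h' : (Nat.unpair (v 0)).2 = v 1 := h
    rw [← h', Nat.pair_unpair]
  · rintro ⟨b, h⟩
    show (Nat.unpair (v 0)).2 = v 1
    rw [← h, Nat.unpair_pair]

theorem FN.mod {f g : (Fin k → ℕ) → ℕ} (hf : FN (m + 1) f) (hg : FN (m + 1) g) :
    FN (m + 1) (fun v => f v % (g v + 1)) := by
  refine FN.app2 (F := fun a d => a % (d + 1)) ?_ hf hg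
  refine SN.congr (SN.ex (R := fun (v : Fin 3 → ℕ) q => v 0 = q * (v 1 + 1) + v 2 ∧ v 2 < v 1 + 1)
    (SN.and (SN.eq (TN.var (0 : Fin 4)) (TN.add (TN.mul (TN.var _)
      (TN.add (TN.var (1 : Fin 4)) (TN.const 1))) (TN.var (2 : Fin 4))))
      (SN.lt (TN.var (2 : Fin 4)) (TN.add (TN.var (1 : Fin 4)) (TN.const 1))))) fun v => ?_
  constructor
  · intro h
    have h' : v 0 % (v 1 + 1) = v 2 := h
    refine ⟨v 0 / (v 1 + 1), ?_, ?_⟩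
    · rw [← h', Nat.mul_comm, Nat.div_add_mod]
    · rw [← h']; exact Nat.mod_lt _ (Nat.succ_pos _)
  · rintro ⟨q, h, h'⟩
    show v 0 % (v 1 + 1) = v 2
    rw [h, Nat.mul_comm, Nat.mul_add_mod, Nat.mod_eq_of_lt h']

theorem FN.beta {f g : (Fin k → ℕ) → ℕ} (hf : FN (m + 1) f) (hg : FN (m + 1) g) :
    FN (m + 1) (fun v => Nat.beta (f v) (g v)) :=
  FN.mod hf.left (FN.app2 (F := fun x y => x * y)
    (TN.mul (TN.var (0 : Fin 2)) (TN.var 1)).fn hg.succ hf.right)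

theorem FN.iter {b : ℕ → ℕ} {g : ℕ → ℕ → ℕ → ℕ} (hb : FN (m + 1) (fun v : Fin 1 → ℕ => b (v 0)))
    (hg : FN (m + 1) (fun v : Fin 3 → ℕ => g (v 0) (v 1) (v 2))) :
    FN (m + 1) (fun v : Fin 2 → ℕ =>
      (Nat.rec (b (v 0)) (fun y IH => g (v 0) y IH) (v 1) : ℕ)) := by
  refine SN.congr (SN.ex (R := fun (v : Fin 3 → ℕ) c => b (v 0) = Nat.beta c 0 ∧
    (∀ y, y < v 1 → g (v 0) y (Nat.beta c y) = Nat.beta c (y + 1)) ∧ Nat.beta c (v 1) = v 2)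
    (SN.and ?_ (SN.and (SN.ball (TN.var (1 : Fin 4)) ?_) ?_))) fun v => ?_
  · exact SN.feq (FN.app1 hb (FN.var (0 : Fin 4))) (FN.beta (FN.var (3 : Fin 4)) (FN.const 0))
  · exact SN.feq (FN.app3 hg (FN.var (0 : Fin 5)) (FN.var (4 : Fin 5))
      (FN.beta (FN.var (3 : Fin 5)) (FN.var (4 : Fin 5))))
      (FN.beta (FN.var (3 : Fin 5)) (FN.var (4 : Fin 5)).succ)
  · exact SN.feq (FN.beta (FN.var (3 : Fin 4)) (FN.var (1 : Fin 4))) (FN.var (2 : Fin 4))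
  · show (Nat.rec (b (v 0)) (fun y IH => g (v 0) y IH) (v 1) : ℕ) = v 2 ↔ _
    set F : ℕ → ℕ := fun n => (Nat.rec (b (v 0)) (fun y IH => g (v 0) y IH) n : ℕ) with hF
    show F (v 1) = v 2 ↔ _
    constructor
    · intro h
      have key : ∀ i, i ≤ v 1 → Nat.beta (Nat.unbeta ((List.range (v 1 + 1)).map F)) i = F i := by
        intro i hi
        have := Nat.beta_unbeta_coe ((List.range (v 1 + 1)).map F) ⟨i, by simp; omega⟩
        simpa using this
      refine ⟨Nat.unbeta ((List.range (v 1 + 1)).map F), ?_, ?_, ?_⟩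
      · rw [key 0 (Nat.zero_le _)]; rfl
      · intro y hy
        rw [key y (by omega), key (y + 1) (by omega)]
      · rw [key _ le_rfl, h]
    · rintro ⟨c, h0, hs, hl⟩
      have key : ∀ i, i ≤ v 1 → Nat.beta c i = F i := by
        intro i
        induction i with
        | zero => intro _; rw [← h0]; rfl
        | succ i ih =>
          intro hi
          rw [← hs i (by omega), ih (by omega)]
      rw [← hl, key _ le_rfl]

theorem fn_of_primrec {f : ℕ → ℕ} (hf : Nat.Primrec f) :
    FN (m + 1) (fun v : Fin 1 → ℕ => f (v 0)) := by
  induction hf with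
  | zero => exact FN.const 0
  | succ => exact (FN.var 0).succ
  | left => exact (FN.var 0).left
  | right => exact (FN.var 0).right
  | pair _ _ h1 h2 => exact FN.pair h1 h2
  | comp _ _ h1 h2 => exact FN.app1 h1 h2
  | @prec f g _ _ h1 h2 =>
    have := FN.iter (m := m) (b := f) (g := fun z y IH => g (Nat.pair z (Nat.pair y IH))) h1
      (FN.app1 h2 (FN.pair (FN.var 0) (FN.pair (FN.var 1) (FN.var 2))))
    exact FN.app2 (F := fun z n => (Nat.rec (f z) (fun y IH => g (Nat.pair z (Nat.pair y IH))) n : ℕ))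
      this (FN.var (0 : Fin 1)).left (FN.var (0 : Fin 1)).right

theorem FN.prim {F : ℕ → ℕ} (hF : Primrec F) {f : (Fin k → ℕ) → ℕ} (hf : FN (m + 1) f) :
    FN (m + 1) (fun v => F (f v)) := FN.app1 (fn_of_primrec (Primrec.nat_iff.1 hF)) hf

theorem FN.prim2 {F : ℕ → ℕ → ℕ} (hF : Primrec₂ F) {f g : (Fin k → ℕ) → ℕ} (hf : FN (m + 1) f)
    (hg : FN (m + 1) g) : FN (m + 1) (fun v => F (f v) (g v)) := by
  have h1 : Primrec (fun x : ℕ => F x.unpair.1 x.unpair.2) :=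
    hF.comp (Primrec.fst.comp Primrec.unpair) (Primrec.snd.comp Primrec.unpair)
  have := FN.prim h1 (FN.pair hf hg)
  simpa using this

/-- The universal Σ_{m+1} relation. -/
def Wn : ℕ → ℕ → ℕ → Prop
  | 0, e, x => (Nat.Partrec.Code.eval (Denumerable.ofNat Nat.Partrec.Code e) x).Dom
  | m + 1, e, x => ∃ y, ¬ Wn m e (Nat.pair x y)

theorem wn_sn (m : ℕ) : SN (m + 1) (fun v : Fin 2 → ℕ => Wn m (v 0) (v 1)) := by
  induction m with
  | zero =>
    have hp : Primrec (fun x : ℕ => Encodable.encode (Nat.Partrec.Code.evaln x.unpair.2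
        (Denumerable.ofNat Nat.Partrec.Code x.unpair.1.unpair.1) x.unpair.1.unpair.2)) := by
      refine Primrec.encode.comp (Nat.Partrec.Code.primrec_evaln.comp
        (f := fun a : (ℕ × Nat.Partrec.Code) × ℕ => Nat.Partrec.Code.evaln a.1.1 a.1.2 a.2)
        (g := fun x : ℕ => ((x.unpair.2, Denumerable.ofNat Nat.Partrec.Code x.unpair.1.unpair.1),
          x.unpair.1.unpair.2)) ?_)
      have hl : Primrec (fun x : ℕ => x.unpair.1) := Primrec.fst.comp Primrec.unpair
      have hr : Primrec (fun x : ℕ => x.unpair.2) := Primrec.snd.comp Primrec.unpair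
      exact ((hr.pair ((Primrec.ofNat _).comp (hl.comp hl))).pair (hr.comp hl))
    refine SN.congr (SN.ex (R := fun (v : Fin 2 → ℕ) t => 0 < Encodable.encode
      (Nat.Partrec.Code.evaln t (Denumerable.ofNat Nat.Partrec.Code (v 0)) (v 1)))
      (SN.congr (SN.flt (FN.const 0) (FN.prim hp (FN.pair (FN.pair (FN.var (0 : Fin 3))
        (FN.var (1 : Fin 3))) (FN.var (2 : Fin 3))))) fun v => by simp; rfl)) fun v => ?_
    show (Nat.Partrec.Code.eval (Denumerable.ofNat Nat.Partrec.Code (v 0)) (v 1)).Dom ↔ _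
    rw [Part.dom_iff_mem]
    simp only [Nat.Partrec.Code.evaln_complete]
    rw [exists_comm]
    refine exists_congr fun t => ?_
    cases h : Nat.Partrec.Code.evaln t (Denumerable.ofNat Nat.Partrec.Code (v 0)) (v 1) with
    | none => simp
    | some a => simp
  | succ m ih =>
    exact SN.ex (R := fun (v : Fin 2 → ℕ) y => ¬ Wn m (v 0) (Nat.pair (v 1) y))
      (SN.app3 (R := fun e x y => ¬ Wn m e (Nat.pair x y)) (by
        have h : SN (m + 1) (fun v : Fin 3 → ℕ => Wn m (v 0) (Nat.pair (v 1) (v 2))) :=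
          SN.app2 ih (FN.var 0) (FN.pair (FN.var 1) (FN.var 2))
        exact h.neg) (FN.var (0 : Fin 3)) (FN.var (1 : Fin 3)) (FN.var (2 : Fin 3)))

theorem tn_primrec {t : (Fin k → ℕ) → ℕ} (ht : TN k t) {α : Type} [Primcodable α]
    (G : α → Fin k → ℕ) (hG : ∀ i, Primrec (fun a => G a i)) : Primrec (fun a => t (G a)) := by
  induction ht with
  | var i => exact hG i
  | const c => exact Primrec.const c
  | add _ _ h1 h2 => exact Primrec.nat_add.comp h1 h2
  | mul _ _ h1 h2 => exact Primrec.nat_mul.comp h1 h2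

theorem d0_primrec {R : (Fin k → ℕ) → Prop} (hR : SN 0 R) : ∀ {α : Type} [Primcodable α]
    (G : α → Fin k → ℕ) (_ : ∀ i, Primrec (fun a => G a i)), PrimrecPred (fun a => R (G a)) := by
  induction hR with
  | falsum k => intro α _ G hG; exact ⟨fun _ => instDecidableFalse, Primrec.const _⟩
  | eq h1 h2 =>
    intro α _ G hG
    exact Primrec.eq.comp (tn_primrec h1 G hG) (tn_primrec h2 G hG)
  | lt h1 h2 =>
    intro α _ G hG
    exact Primrec.nat_lt.comp (tn_primrec h1 G hG) (tn_primrec h2 G hG)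
  | imp _ _ h1 h2 =>
    intro α _ G hG
    exact ((h1 G hG).not.or (h2 G hG)).of_eq fun a => by tauto
  | @ball k t R ht _ ih =>
    intro α _ G hG
    have h1 : PrimrecRel (fun (y : ℕ) (a : α) => R (sn (G a) y)) := by
      refine ih (α := ℕ × α) (fun p => sn (G p.2) p.1) (fun i => ?_)
      refine Fin.lastCases ?_ (fun i => ?_) i
      · simpa using Primrec.fst
      · simpa using (hG i).comp Primrec.snd
    have h2 := PrimrecRel.comp (PrimrecRel.forall_mem_list h1)
      (Primrec.list_range.comp (tn_primrec ht G hG)) (Primrec.id (α := α))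
    exact h2.of_eq fun a => by simp only [List.mem_range, id]; exact Iff.rfl

theorem wn_univ (m : ℕ) {R : ℕ → Prop} (hR : SN (m + 1) (fun v : Fin 1 → ℕ => R (v 0))) :
    ∃ e, ∀ x, R x ↔ Wn m e x := by
  induction m generalizing R with
  | zero =>
    obtain ⟨P, hP, e⟩ := hR.cases
    have h1 : PrimrecPred (fun p : ℕ × ℕ => P (sn (fun _ : Fin 1 => p.1) p.2)) := by
      refine d0_primrec hP _ (fun i => ?_)
      refine Fin.lastCases ?_ (fun i => ?_) i
      · simp only [sn, Fin.snoc_last]; exact Primrec.snd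
      · simp only [sn, Fin.snoc_castSucc]; exact Primrec.fst
    obtain ⟨hd, h2⟩ := h1.not
    have h3 : Partrec (fun x : ℕ => Nat.rfind (fun y => Part.some (@decide (¬ P (sn (fun _ : Fin 1 => x) y)) (hd (x, y))))) := by
      refine Partrec.rfind ?_
      exact h2.to_comp.partrec
    obtain ⟨c, hc⟩ := Nat.Partrec.Code.exists_code.1 (Partrec.nat_iff.1 h3)
    refine ⟨Encodable.encode c, fun x => ?_⟩
    show _ ↔ (Nat.Partrec.Code.eval (Denumerable.ofNat Nat.Partrec.Code _) x).Dom
    rw [Denumerable.ofNat_encode, hc]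
    refine Iff.trans ?_ (Nat.rfind_dom (p := fun y =>
      Part.some (@decide (¬ P (sn (fun _ : Fin 1 => x) y)) (hd (x, y))))).symm
    have e' := e (fun _ => x)
    beta_reduce at e'
    rw [e']
    constructor
    · rintro ⟨y, hy⟩
      exact ⟨y, by simpa using hy, fun _ => trivial⟩
    · rintro ⟨y, hy, _⟩
      exact ⟨y, by simpa using hy⟩
  | succ m ih =>
    obtain ⟨P, hP, e⟩ := hR.cases
    obtain ⟨c, hc⟩ := ih (R := fun z => P (sn (fun _ : Fin 1 => z.unpair.1) z.unpair.2)) (by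
      have := SN.app hP (f := fun i (v : Fin 1 → ℕ) =>
        sn (fun _ : Fin 1 => (v 0).unpair.1) (v 0).unpair.2 i) (fun i => by
          refine Fin.lastCases ?_ (fun i => ?_) i
          · simp only [sn, Fin.snoc_last]; exact (FN.var 0).right
          · simp only [sn, Fin.snoc_castSucc]; exact (FN.var 0).left)
      exact this)
    refine ⟨c, fun x => ?_⟩
    have e' := e (fun _ => x)
    beta_reduce at e'
    rw [e']
    refine exists_congr fun y => not_congr ?_
    rw [← hc, Nat.unpair_pair]

end Rec
end ArithFC

namespace ArithFC

section HullDef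

/-- A nonprincipal ultrafilter on ℕ. -/
noncomputable abbrev UU : Filter ℕ := ((Filter.hyperfilter ℕ : Ultrafilter ℕ) : Filter ℕ)

theorem uu_not {P : ℕ → Prop} : (∀ᶠ i in UU, ¬ P i) ↔ ¬ ∀ᶠ i in UU, P i := Ultrafilter.eventually_not
theorem uu_imp {P Q : ℕ → Prop} : (∀ᶠ i in UU, (P i → Q i)) ↔
    ((∀ᶠ i in UU, P i) → ∀ᶠ i in UU, Q i) := Ultrafilter.eventually_imp
theorem uu_gt (e : ℕ) : ∀ᶠ i in UU, e < i := by
  have h : ∀ᶠ i in Filter.cofinite, e < i := by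
    rw [Nat.cofinite_eq_atTop]
    exact Filter.eventually_gt_atTop e
  exact Filter.hyperfilter_le_cofinite h

/-- Functions given almost everywhere by a Σ_{n+1} partial function. -/
def InH (n : ℕ) (f : ℕ → ℕ) : Prop :=
  ∃ G : ℕ → ℕ → Prop, SN (n + 1) (fun v : Fin 2 → ℕ => G (v 0) (v 1)) ∧
    (∀ i y y', G i y → G i y' → y = y') ∧ ∀ᶠ i in UU, G i (f i)

variable {n : ℕ}

theorem skol {q : ℕ} {f : Fin q → ℕ → ℕ} (hf : ∀ j, InH n (f j)) {R : (Fin q → ℕ) → ℕ → Prop}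
    (hR : SN (n + 1) (fun w : Fin (q + 1) → ℕ => R (Fin.init w) (w (Fin.last q))))
    (h : ∀ᶠ i in UU, ∃ y, R (fun j => f j i) y) :
    ∃ g, InH n g ∧ ∀ᶠ i in UU, R (fun j => f j i) (g i) := by
  obtain ⟨Q, hQ, h1, h2, h3⟩ := SN.unif hR
  choose G hG hG1 hG2 using hf
  have h4 : ∀ᶠ i in UU, ∃ y, Q (fun j => f j i) y := h.mono fun i hi => h3 _ hi
  classical
  let g : ℕ → ℕ := fun i => if hi : ∃ y, Q (fun j => f j i) y then hi.choose else 0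
  have hg : ∀ᶠ i in UU, Q (fun j => f j i) (g i) := h4.mono fun i hi => by
    simp only [g, hi, dif_pos]; exact hi.choose_spec
  refine ⟨g, ⟨fun i y => ∃ u : Fin q → ℕ, (∀ j, G j i (u j)) ∧ Q u y, ?_, ?_, ?_⟩,
    hg.mono fun i hi => h1 _ _ hi⟩
  · refine SN.relcomp (k := 2) (G := fun j v y => G j (v 0) y) (R := fun v u => Q u (v 1)) ?_ ?_
    · intro j
      exact (hG j).subst (fun w : Fin 3 → ℕ => ![w 0, w 2]) (fun i => by
        match i with
        | 0 => exact TN.var _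
        | 1 => exact TN.var _)
    · intro j A B hA hB
      exact (hQ.subst (fun w => sn (B w) (A w 1)) (TN.sn hB (hA 1))).congr fun w => by simp
  · rintro i y y' ⟨u, hu, hy⟩ ⟨u', hu', hy'⟩
    have : u = u' := funext fun j => hG1 j i _ _ (hu j) (hu' j)
    subst this
    exact h2 _ _ _ hy hy'
  · have h5 : ∀ᶠ i in UU, ∀ j, G j i (f j i) := Filter.eventually_all.2 hG2
    filter_upwards [hg, h5] with i hi hi'
    exact ⟨_, hi', hi⟩

theorem inh_fn {q : ℕ} {f : Fin q → ℕ → ℕ} (hf : ∀ j, InH n (f j)) {F : (Fin q → ℕ) → ℕ}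
    (hF : FN (n + 1) F) : InH n (fun i => F (fun j => f j i)) := by
  obtain ⟨g, ⟨G, h1, h2, h3⟩, hg'⟩ := skol hf (R := fun u y => F u = y) hF
    (Filter.Eventually.of_forall fun i => ⟨_, rfl⟩)
  refine ⟨G, h1, h2, ?_⟩
  filter_upwards [h3, hg'] with i hi hi'
  rwa [hi']

theorem inh_id : InH n (fun i => i) :=
  ⟨fun i y => i = y, SN.eq (TN.var _) (TN.var _), fun i y y' h h' => h.symm.trans h',
    Filter.Eventually.of_forall fun i => rfl⟩

theorem inh_const (c : ℕ) : InH n (fun _ => c) :=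
  inh_fn (q := 0) (f := finZeroElim) (fun j => j.elim0) (F := fun _ => c) (TN.const c).fn

theorem inh_prim {F : ℕ → ℕ} (hF : Primrec F) {f : ℕ → ℕ} (hf : InH n f) :
    InH n (fun i => F (f i)) :=
  inh_fn (q := 1) (f := ![f]) (fun j => by match j with | 0 => exact hf)
    (F := fun v => F (v 0)) (fn_of_primrec (Primrec.nat_iff.1 hF))

theorem inh_prim2 {F : ℕ → ℕ → ℕ} (hF : Primrec₂ F) {f g : ℕ → ℕ} (hf : InH n f) (hg : InH n g) :
    InH n (fun i => F (f i) (g i)) :=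
  inh_fn (q := 2) (f := ![f, g]) (fun j => by match j with | 0 => exact hf | 1 => exact hg)
    (F := fun v => F (v 0) (v 1)) (FN.prim2 hF (FN.var 0) (FN.var 1))

/-- Almost everywhere equality. -/
def hullSetoid (n : ℕ) : Setoid {f : ℕ → ℕ // InH n f} where
  r f g := ∀ᶠ i in UU, f.1 i = g.1 i
  iseqv := ⟨fun f => Filter.Eventually.of_forall fun i => rfl, fun h => h.mono fun i h => h.symm,
    fun h h' => by filter_upwards [h, h'] with i hi hi'; exact hi.trans hi'⟩

/-- The Σ_{n+1} hull of the identity in the ultrapower of ℕ. -/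
def Hull (n : ℕ) : Type := Quotient (hullSetoid n)

/-- A representative. -/
noncomputable def rep (x : Hull n) : ℕ → ℕ := (Quotient.out x).1
theorem rep_inh (x : Hull n) : InH n (rep x) := (Quotient.out x).2
/-- The class of a function. -/
def hmk (f : ℕ → ℕ) (hf : InH n f) : Hull n := Quotient.mk (hullSetoid n) ⟨f, hf⟩
theorem rep_hmk (f : ℕ → ℕ) (hf : InH n f) : ∀ᶠ i in UU, rep (hmk f hf) i = f i :=
  Quotient.mk_out (s := hullSetoid n) ⟨f, hf⟩
theorem hull_eq {x y : Hull n} : x = y ↔ ∀ᶠ i in UU, rep x i = rep y i := by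
  constructor
  · rintro rfl
    exact Filter.Eventually.of_forall fun i => rfl
  · intro h
    rw [← Quotient.out_eq x, ← Quotient.out_eq y]
    exact Quotient.sound (s := hullSetoid n) h

noncomputable instance hullStr (n : ℕ) : lang.Structure (Hull n) where
  funMap := fun {k} (f : Func k) =>
    match f with
    | Func.zero => fun _ => hmk _ (inh_const 0)
    | Func.one => fun _ => hmk _ (inh_const 1)
    | Func.add => fun v => hmk _ (inh_prim2 Primrec.nat_add (rep_inh (v 0)) (rep_inh (v 1)))
    | Func.mul => fun v => hmk _ (inh_prim2 Primrec.nat_mul (rep_inh (v 0)) (rep_inh (v 1)))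
  RelMap := fun {k} (r : Rel k) =>
    match r with
    | Rel.lt => fun v => ∀ᶠ i in UU, rep (v 0) i < rep (v 1) i

theorem rep_zero : ∀ᶠ i in UU, rep (0 : Hull n) i = 0 := rep_hmk _ _
theorem rep_one : ∀ᶠ i in UU, rep (1 : Hull n) i = 1 := rep_hmk _ _
theorem rep_add (x y : Hull n) : ∀ᶠ i in UU, rep (x + y) i = rep x i + rep y i := rep_hmk _ _
theorem rep_mul (x y : Hull n) : ∀ᶠ i in UU, rep (x * y) i = rep x i * rep y i := rep_hmk _ _
theorem hull_lt {x y : Hull n} : x < y ↔ ∀ᶠ i in UU, rep x i < rep y i := Iff.rfl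
theorem hull_le {x y : Hull n} : x ≤ y ↔ ∀ᶠ i in UU, rep x i ≤ rep y i := by
  show (x < y ∨ x = y) ↔ _
  rw [hull_eq, hull_lt, ← Ultrafilter.eventually_or]
  simp only [le_iff_lt_or_eq]

theorem hull_skol {q : ℕ} (h : Fin q → Hull n) {R : (Fin q → ℕ) → ℕ → Prop}
    (hR : SN (n + 1) (fun w : Fin (q + 1) → ℕ => R (Fin.init w) (w (Fin.last q))))
    (H : ∀ᶠ i in UU, ∃ y, R (fun j => rep (h j) i) y) :
    ∃ g : Hull n, ∀ᶠ i in UU, R (fun j => rep (h j) i) (rep g i) := by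
  obtain ⟨g, hg, hg'⟩ := skol (fun j => rep_inh (h j)) hR H
  refine ⟨hmk g hg, ?_⟩
  filter_upwards [hg', rep_hmk g hg] with i hi hi'
  rwa [hi']

theorem hull_pam (n : ℕ) : PAm (Hull n) where
  add_assoc x y z := by
    rw [hull_eq]
    filter_upwards [rep_add (x + y) z, rep_add x y, rep_add x (y + z), rep_add y z]
      with i h1 h2 h3 h4
    rw [h1, h2, h3, h4, Nat.add_assoc]
  add_comm x y := by
    rw [hull_eq]
    filter_upwards [rep_add x y, rep_add y x] with i h1 h2
    rw [h1, h2, Nat.add_comm]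
  mul_assoc x y z := by
    rw [hull_eq]
    filter_upwards [rep_mul (x * y) z, rep_mul x y, rep_mul x (y * z), rep_mul y z]
      with i h1 h2 h3 h4
    rw [h1, h2, h3, h4, Nat.mul_assoc]
  mul_comm x y := by
    rw [hull_eq]
    filter_upwards [rep_mul x y, rep_mul y x] with i h1 h2
    rw [h1, h2, Nat.mul_comm]
  ldistrib x y z := by
    rw [hull_eq]
    filter_upwards [rep_mul x (y + z), rep_add y z, rep_add (x * y) (x * z), rep_mul x y,
      rep_mul x z] with i h1 h2 h3 h4 h5
    rw [h1, h2, h3, h4, h5, Nat.mul_add]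
  add_zero x := by
    rw [hull_eq]
    filter_upwards [rep_add x 0, rep_zero (n := n)] with i h1 h2
    rw [h1, h2, Nat.add_zero]
  mul_zero x := by
    rw [hull_eq]
    filter_upwards [rep_mul x 0, rep_zero (n := n)] with i h1 h2
    rw [h1, h2, Nat.mul_zero]
  mul_one x := by
    rw [hull_eq]
    filter_upwards [rep_mul x 1, rep_one (n := n)] with i h1 h2
    rw [h1, h2, Nat.mul_one]
  lt_trans x y z h h' := by
    rw [hull_lt] at *
    filter_upwards [h, h'] with i h1 h2
    exact Nat.lt_trans h1 h2
  lt_irrefl x h := by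
    rw [hull_lt] at h
    obtain ⟨i, hi⟩ := h.exists
    exact Nat.lt_irrefl _ hi
  lt_total x y := by
    rw [hull_lt, hull_lt, hull_eq, ← Ultrafilter.eventually_or, ← Ultrafilter.eventually_or]
    exact Filter.Eventually.of_forall fun i => Nat.lt_trichotomy _ _
  add_lt_add x y z h := by
    rw [hull_lt] at *
    filter_upwards [h, rep_add x z, rep_add y z] with i h1 h2 h3
    omega
  mul_lt_mul x y z h h' := by
    rw [hull_lt] at *
    filter_upwards [h, h', rep_mul x z, rep_mul y z, rep_zero (n := n)] with i h1 h2 h3 h4 h5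
    rw [h3, h4]
    rw [h5] at h2
    exact Nat.mul_lt_mul_of_pos_right h1 h2
  sub_exists x y h := by
    rw [hull_lt] at h
    refine ⟨hmk _ (inh_prim2 Primrec.nat_sub (rep_inh y) (rep_inh x)), ?_⟩
    rw [hull_eq]
    filter_upwards [h, rep_add x (hmk _ (inh_prim2 Primrec.nat_sub (rep_inh y) (rep_inh x))),
      rep_hmk _ (inh_prim2 Primrec.nat_sub (rep_inh y) (rep_inh x))] with i h1 h2 h3
    rw [h2, h3]
    omega
  zero_lt_one := by
    rw [hull_lt]
    filter_upwards [rep_zero (n := n), rep_one (n := n)] with i h1 h2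
    omega
  discrete x h := by
    rw [hull_lt] at h
    rw [hull_le]
    filter_upwards [h, rep_zero (n := n), rep_one (n := n)] with i h h1 h2
    omega
  zero_le x := by
    rw [hull_le]
    filter_upwards [rep_zero (n := n)] with i h
    omega

end HullDef

section Los
variable {n : ℕ}

theorem lift_tm {k : ℕ} {t : (Fin k → ℕ) → ℕ} (ht : TN k t) :
    ∃ T : (Fin k → Hull n) → Hull n, Tm k T ∧
      ∀ v, ∀ᶠ i in UU, rep (T v) i = t (fun j => rep (v j) i) := by
  induction ht with
  | var i => exact ⟨_, Tm.var _ i, fun v => Filter.Eventually.of_forall fun _ => rfl⟩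
  | const c => exact ⟨_, Tm.const _ (hmk _ (inh_const c)), fun v => rep_hmk _ _⟩
  | add _ _ h1 h2 =>
    obtain ⟨T1, t1, e1⟩ := h1
    obtain ⟨T2, t2, e2⟩ := h2
    refine ⟨_, Tm.add t1 t2, fun v => ?_⟩
    filter_upwards [e1 v, e2 v, rep_add (T1 v) (T2 v)] with i h1 h2 h3
    rw [h3, h1, h2]; rfl
  | mul _ _ h1 h2 =>
    obtain ⟨T1, t1, e1⟩ := h1
    obtain ⟨T2, t2, e2⟩ := h2
    refine ⟨_, Tm.mul t1 t2, fun v => ?_⟩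
    filter_upwards [e1 v, e2 v, rep_mul (T1 v) (T2 v)] with i h1 h2 h3
    rw [h3, h1, h2]; rfl

theorem rep_sn {k : ℕ} (v : Fin k → Hull n) (y : Hull n) (i : ℕ) :
    (fun j => rep (sn v y j) i) = sn (fun j => rep (v j) i) (rep y i) := by
  funext j
  refine Fin.lastCases ?_ (fun j => ?_) j
  · simp
  · simp

theorem lift_d0 {k : ℕ} {R : (Fin k → ℕ) → Prop} (hR : SN 0 R) :
    D0 k (fun v : Fin k → Hull n => ∀ᶠ i in UU, R (fun j => rep (v j) i)) := by
  induction hR with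
  | falsum k =>
    refine (D0.falsum k).congr fun v => ?_
    exact ⟨fun h => h.exists.elim fun _ h => h, False.elim⟩
  | eq h1 h2 =>
    obtain ⟨T1, t1, e1⟩ := lift_tm (n := n) h1
    obtain ⟨T2, t2, e2⟩ := lift_tm (n := n) h2
    refine (D0.eq t1 t2).congr fun v => ?_
    rw [hull_eq]
    refine Filter.eventually_congr ?_
    filter_upwards [e1 v, e2 v] with i h1 h2
    rw [h1, h2]
  | lt h1 h2 =>
    obtain ⟨T1, t1, e1⟩ := lift_tm (n := n) h1
    obtain ⟨T2, t2, e2⟩ := lift_tm (n := n) h2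
    refine (D0.lt t1 t2).congr fun v => ?_
    rw [hull_lt]
    refine Filter.eventually_congr ?_
    filter_upwards [e1 v, e2 v] with i h1 h2
    rw [h1, h2]; rfl
  | imp _ _ h1 h2 =>
    exact (D0.imp h1 h2).congr fun v => uu_imp
  | @ball k t R ht hR ih =>
    obtain ⟨T, tT, eT⟩ := lift_tm (n := n) ht
    refine (D0.ball tT ih).congr fun v => ?_
    constructor
    · intro h y hy
      filter_upwards [h, hy, eT v] with i h1 h2 h3
      rw [rep_sn]
      exact h1 _ (by rw [← h3]; exact h2)
    · intro h
      by_contra hc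
      rw [← uu_not] at hc
      have hc' : ∀ᶠ i in UU, ∃ y, y < t (fun j => rep (v j) i) ∧
          ¬ R (sn (fun j => rep (v j) i) y) := hc.mono fun i hi => by
        push Not at hi
        exact hi
      obtain ⟨g, hg⟩ := hull_skol v (R := fun u y => y < t u ∧ ¬ R (sn u y)) (by
        refine SN.and (SN.lt (TN.var _) (TN.up ht)) ?_
        have h0 : SN 0 R := hR
        have h0' := (h0.neg).mono (Nat.succ_le_succ (Nat.zero_le n))
        exact h0'.congr fun w => by simp) hc'
      have := h g (by
        rw [hull_lt]
        filter_upwards [hg, eT v] with i h1 h2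
        rw [h2]; exact h1.1)
      obtain ⟨i, h1, h2⟩ := (this.and hg).exists
      rw [rep_sn] at h1
      exact h2.2 h1

theorem lift_s {m : ℕ} (hm : m ≤ n + 1) {k : ℕ} {R : (Fin k → ℕ) → Prop} (hR : SN m R) :
    S m (fun v : Fin k → Hull n => ∀ᶠ i in UU, R (fun j => rep (v j) i)) := by
  induction m generalizing k with
  | zero => exact lift_d0 hR
  | succ m ih =>
    obtain ⟨P, hP, e⟩ := hR.cases
    refine ⟨_, ih (by omega) hP, fun v => ?_⟩
    constructor
    · intro h
      obtain ⟨g, hg⟩ := hull_skol v (R := fun u y => ¬ P (sn u y)) (by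
        have h0' := (hP.neg).mono hm
        exact h0'.congr fun w => by simp) (h.mono fun i hi => (e _).1 hi)
      refine ⟨g, ?_⟩
      rw [← uu_not]
      filter_upwards [hg] with i hi
      rwa [rep_sn]
    · rintro ⟨y, hy⟩
      rw [← uu_not] at hy
      filter_upwards [hy] with i hi
      rw [rep_sn] at hi
      exact (e _).2 ⟨_, hi⟩

/-- Jointly Σ_m relations. -/
def JD (m : ℕ) {p k : ℕ} (R : (Fin p → ℕ) → (Fin k → ℕ) → Prop) : Prop :=
  ∀ {j : ℕ} (A : (Fin j → ℕ) → Fin p → ℕ) (B : (Fin j → ℕ) → Fin k → ℕ),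
    (∀ i, TN j (fun v => A v i)) → (∀ i, TN j (fun v => B v i)) →
      SN m (fun w => R (A w) (B w))

/-- Jointly polynomial functions. -/
def JT {p k : ℕ} (R : (Fin p → ℕ) → (Fin k → ℕ) → ℕ) : Prop :=
  ∀ {j : ℕ} (A : (Fin j → ℕ) → Fin p → ℕ) (B : (Fin j → ℕ) → Fin k → ℕ),
    (∀ i, TN j (fun v => A v i)) → (∀ i, TN j (fun v => B v i)) →
      TN j (fun w => R (A w) (B w))

theorem lower_tm {k : ℕ} {T : (Fin k → Hull n) → Hull n} (hT : Tm k T) :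
    ∃ (p : ℕ) (h : Fin p → Hull n) (t : (Fin p → ℕ) → (Fin k → ℕ) → ℕ), JT t ∧
      ∀ v, ∀ᶠ i in UU, rep (T v) i = t (fun j => rep (h j) i) (fun j => rep (v j) i) := by
  induction hT with
  | var i => exact ⟨0, finZeroElim, fun _ v => v i, fun A B _ hB => hB i,
      fun v => Filter.Eventually.of_forall fun _ => rfl⟩
  | const c => exact ⟨1, fun _ => c, fun u _ => u 0, fun A B hA _ => hA 0,
      fun v => Filter.Eventually.of_forall fun _ => rfl⟩
  | add _ _ h1 h2 =>
    obtain ⟨p1, g1, t1, j1, e1⟩ := h1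
    obtain ⟨p2, g2, t2, j2, e2⟩ := h2
    refine ⟨p1 + p2, Fin.append g1 g2, fun u v => t1 (fun j => u (Fin.castAdd p2 j)) v +
      t2 (fun j => u (Fin.natAdd p1 j)) v, fun A B hA hB => TN.add
        (j1 _ _ (fun i => hA _) hB) (j2 _ _ (fun i => hA _) hB), fun v => ?_⟩
    filter_upwards [e1 v, e2 v, rep_add _ _] with i h1 h2 h3
    rw [h3, h1, h2]
    simp only [Fin.append_left, Fin.append_right]
  | mul _ _ h1 h2 =>
    obtain ⟨p1, g1, t1, j1, e1⟩ := h1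
    obtain ⟨p2, g2, t2, j2, e2⟩ := h2
    refine ⟨p1 + p2, Fin.append g1 g2, fun u v => t1 (fun j => u (Fin.castAdd p2 j)) v *
      t2 (fun j => u (Fin.natAdd p1 j)) v, fun A B hA hB => TN.mul
        (j1 _ _ (fun i => hA _) hB) (j2 _ _ (fun i => hA _) hB), fun v => ?_⟩
    filter_upwards [e1 v, e2 v, rep_mul _ _] with i h1 h2 h3
    rw [h3, h1, h2]
    simp only [Fin.append_left, Fin.append_right]

theorem hull_skol2 {p k : ℕ} (h : Fin p → Hull n) (v : Fin k → Hull n)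
    {R : (Fin p → ℕ) → (Fin k → ℕ) → ℕ → Prop}
    (hR : JD (n + 1) (fun u (w : Fin (k + 1) → ℕ) => R u (Fin.init w) (w (Fin.last k))))
    (H : ∀ᶠ i in UU, ∃ y, R (fun j => rep (h j) i) (fun j => rep (v j) i) y) :
    ∃ g : Hull n, ∀ᶠ i in UU, R (fun j => rep (h j) i) (fun j => rep (v j) i) (rep g i) := by
  have := hull_skol (Fin.append h v) (R := fun u y => R (fun j => u (Fin.castAdd k j))
    (fun j => u (Fin.natAdd p j)) y) (by
      have := hR (j := p + k + 1) (fun w j => w (Fin.castSucc (Fin.castAdd k j)))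
        (fun w => sn (fun j => w (Fin.castSucc (Fin.natAdd p j))) (w (Fin.last _)))
        (fun i => TN.var _) (TN.sn (fun i => TN.var _) (TN.var _))
      refine this.congr fun w => ?_
      simp only [Fin.init_snoc, Fin.snoc_last]
      rfl)
  simp only [Fin.append_left, Fin.append_right] at this
  exact this H

theorem lower_d0 {k : ℕ} {T : (Fin k → Hull n) → Prop} (hT : D0 k T) :
    ∃ (p : ℕ) (h : Fin p → Hull n) (R : (Fin p → ℕ) → (Fin k → ℕ) → Prop), JD 0 R ∧
      ∀ v, T v ↔ ∀ᶠ i in UU, R (fun j => rep (h j) i) (fun j => rep (v j) i) := by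
  induction hT with
  | falsum k =>
    exact ⟨0, finZeroElim, fun _ _ => False, fun A B _ _ => @D0.falsum ℕ natStr _,
      fun v => ⟨False.elim, fun h => h.exists.elim fun _ h => h⟩⟩
  | eq h1 h2 =>
    obtain ⟨p1, g1, t1, j1, e1⟩ := lower_tm h1
    obtain ⟨p2, g2, t2, j2, e2⟩ := lower_tm h2
    refine ⟨p1 + p2, Fin.append g1 g2, fun u v => t1 (fun j => u (Fin.castAdd p2 j)) v =
      t2 (fun j => u (Fin.natAdd p1 j)) v, fun A B hA hB => SN.eq
        (j1 _ _ (fun i => hA _) hB) (j2 _ _ (fun i => hA _) hB), fun v => ?_⟩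
    beta_reduce
    rw [hull_eq]
    refine Filter.eventually_congr ?_
    filter_upwards [e1 v, e2 v] with i h1 h2
    rw [h1, h2]
    simp only [Fin.append_left, Fin.append_right]
  | lt h1 h2 =>
    obtain ⟨p1, g1, t1, j1, e1⟩ := lower_tm h1
    obtain ⟨p2, g2, t2, j2, e2⟩ := lower_tm h2
    refine ⟨p1 + p2, Fin.append g1 g2, fun u v => t1 (fun j => u (Fin.castAdd p2 j)) v <
      t2 (fun j => u (Fin.natAdd p1 j)) v, fun A B hA hB => SN.lt
        (j1 _ _ (fun i => hA _) hB) (j2 _ _ (fun i => hA _) hB), fun v => ?_⟩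
    beta_reduce
    rw [hull_lt]
    refine Filter.eventually_congr ?_
    filter_upwards [e1 v, e2 v] with i h1 h2
    rw [h1, h2]
    simp only [Fin.append_left, Fin.append_right]
  | imp _ _ h1 h2 =>
    obtain ⟨p1, g1, t1, j1, e1⟩ := h1
    obtain ⟨p2, g2, t2, j2, e2⟩ := h2
    refine ⟨p1 + p2, Fin.append g1 g2, fun u v => t1 (fun j => u (Fin.castAdd p2 j)) v →
      t2 (fun j => u (Fin.natAdd p1 j)) v, fun A B hA hB => @D0.imp ℕ natStr _ _ _
        (j1 _ _ (fun i => hA _) hB) (j2 _ _ (fun i => hA _) hB), fun v => ?_⟩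
    beta_reduce
    rw [uu_imp, e1 v, e2 v]
    simp only [Fin.append_left, Fin.append_right]
  | @ball k t R ht hR ih =>
    obtain ⟨p1, g1, t1, j1, e1⟩ := lower_tm ht
    obtain ⟨p2, g2, t2, j2, e2⟩ := ih
    refine ⟨p1 + p2, Fin.append g1 g2, fun u v => ∀ y, y < t1 (fun j => u (Fin.castAdd p2 j)) v →
      t2 (fun j => u (Fin.natAdd p1 j)) (sn v y), fun A B hA hB => SN.ball
        (j1 _ _ (fun i => hA _) hB) (j2 _ _ (fun i => (hA _).up)
          (TN.sn (fun i => (hB i).up) (TN.var _))), fun v => ?_⟩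
    simp only [Fin.append_left, Fin.append_right]
    constructor
    · intro h
      by_contra hc
      rw [← uu_not] at hc
      obtain ⟨g, hg⟩ := hull_skol2 (Fin.append g1 g2) v
        (R := fun u v y => y < t1 (fun j => u (Fin.castAdd p2 j)) v ∧
          ¬ t2 (fun j => u (Fin.natAdd p1 j)) (sn v y)) (by
            intro j A B hA hB
            refine SN.and (SN.lt (hB _) (j1 _ _ (fun i => hA _) (fun i => hB _))) ?_
            have h0 := j2 (fun w i => A w (Fin.natAdd p1 i)) B (fun i => hA _) hB
            have h0' := (h0.neg).mono (Nat.succ_le_succ (Nat.zero_le n))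
            exact h0'.congr fun w => by simp) (hc.mono fun i hi => by
              push Not at hi
              simp only [Fin.append_left, Fin.append_right]
              exact hi)
      simp only [Fin.append_left, Fin.append_right] at hg
      have := h g (by
        rw [hull_lt]
        filter_upwards [hg, e1 v] with i h1 h2
        rw [h2]; exact h1.1)
      rw [e2] at this
      obtain ⟨i, h1, h2⟩ := (this.and hg).exists
      rw [rep_sn] at h1
      exact h2.2 h1
    · intro h y hy
      rw [e2]
      filter_upwards [h, hull_lt.1 hy, e1 v] with i h1 h2 h3
      rw [rep_sn]
      exact h1 _ (by rw [← h3]; exact h2)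

theorem lower_s {m : ℕ} (hm : m ≤ n + 1) {k : ℕ} {T : (Fin k → Hull n) → Prop} (hT : S m T) :
    ∃ (p : ℕ) (h : Fin p → Hull n) (R : (Fin p → ℕ) → (Fin k → ℕ) → Prop), JD m R ∧
      ∀ v, T v ↔ ∀ᶠ i in UU, R (fun j => rep (h j) i) (fun j => rep (v j) i) := by
  induction m generalizing k with
  | zero => exact lower_d0 hT
  | succ m ih =>
    obtain ⟨P, hP, e⟩ := hT
    obtain ⟨p, h, R, hR, e'⟩ := ih (by omega) hP
    refine ⟨p, h, fun u v => ∃ y, ¬ R u (sn v y), ?_, fun v => ?_⟩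
    · intro j A B hA hB
      exact SN.ex (SN.neg (hR _ _ (fun i => (hA i).up) (TN.sn (fun i => (hB i).up) (TN.var _))))
    · rw [e]
      constructor
      · rintro ⟨y, hy⟩
        rw [e', ← uu_not] at hy
        filter_upwards [hy] with i hi
        rw [rep_sn] at hi
        exact ⟨_, hi⟩
      · intro H
        obtain ⟨g, hg⟩ := hull_skol2 h v (R := fun u v y => ¬ R u (sn v y)) (by
          intro j A B hA hB
          exact ((hR A B hA hB).neg.mono hm).congr fun w => by simp) H
        refine ⟨g, ?_⟩
        rw [e', ← uu_not]
        filter_upwards [hg] with i hi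
        rwa [rep_sn]

theorem hull_isem (n : ℕ) : ISem (Hull n) n := by
  intro A hA h0 hs x
  by_contra hx
  obtain ⟨p, h, R, hR, e⟩ := lower_s (Nat.le_succ n) hA
  have e1 : ∀ y : Hull n, A y ↔ ∀ᶠ i in UU, R (fun j => rep (h j) i) (fun _ => rep y i) :=
    fun y => e (fun _ => y)
  rw [e1, ← uu_not] at hx
  obtain ⟨g, hg⟩ := hull_skol h (R := fun u y => ¬ R u (fun _ => y) ∧
      ∀ z, z < y → R u (fun _ => z)) (by
    refine SN.and (SN.neg (hR _ _ (fun i => TN.var _) (fun i => TN.var _))) (SN.up (SN.ball (TN.var _)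
      (hR _ _ (fun i => TN.var _) (fun i => TN.var _)))))
    (hx.mono fun i hi => by
      classical
      have hex : ∃ y, ¬ R (fun j => rep (h j) i) (fun _ => y) := ⟨_, hi⟩
      exact ⟨Nat.find hex, Nat.find_spec hex, fun z hz => by
        have := Nat.find_min hex hz; push Not at this; exact this⟩)
  have hgA : ¬ A g := by
    rw [e1, ← uu_not]
    exact hg.mono fun i hi => hi.1
  have hM := hull_pam n
  rcases hM.zero_le g with hlt | heq
  · have : ∃ z, (1 : Hull n) + z = g := by
      rcases hM.discrete g hlt with h1 | h1
      · exact hM.sub_exists _ _ h1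
      · exact ⟨0, by rw [hM.add_zero, h1]⟩
    obtain ⟨z, hz⟩ := this
    rw [hM.add_comm] at hz
    have hzA : A z := by
      rw [e1]
      have hzg : z < g := by rw [← hz]; exact PAm.lt_succ hM z
      filter_upwards [hg, hull_lt.1 hzg] with i h1 h2
      exact h1.2 _ h2
    exact hgA (hz ▸ hs z hzA)
  · exact hgA (heq ▸ h0)

end Los
end ArithFC

namespace ArithFC

section Names

/-- `s` witnesses the name `s.unpair.2 < i`. -/
def QQ (m i s : ℕ) : Prop :=
  s.unpair.2 < i ∧ ¬ Wn m s.unpair.2 (Nat.pair i s.unpair.1) ∧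
    ∀ z, z < s.unpair.1 → Wn m s.unpair.2 (Nat.pair i z)

/-- The value named by `s`. -/
def val (s : ℕ) : ℕ := s.unpair.1.unpair.1

variable {m : ℕ}

theorem ballF {m k : ℕ} {R : ℕ → ℕ → ℕ → Prop}
    (hR : SN (m + 1) (fun v : Fin 3 → ℕ => R (v 0) (v 1) (v 2)))
    {f g h : (Fin k → ℕ) → ℕ} (hf : FN (m + 1) f) (hg : FN (m + 1) g) (hh : FN (m + 1) h) :
    SN (m + 1) (fun v => ∀ z, z < f v → R (g v) (h v) z) := by
  refine SN.app3 (R := fun b x y => ∀ z, z < b → R x y z) ?_ hf hg hh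
  refine SN.ball (TN.var (0 : Fin 3)) ?_
  exact hR.subst (fun w : Fin 4 → ℕ => ![w 1, w 2, w 3]) (fun i => by
        match i with
        | 0 => exact TN.var _
        | 1 => exact TN.var _
        | 2 => exact TN.var _)

theorem bexF {m k : ℕ} {R : ℕ → ℕ → ℕ → Prop}
    (hR : SN (m + 1) (fun v : Fin 3 → ℕ => R (v 0) (v 1) (v 2)))
    {f g h : (Fin k → ℕ) → ℕ} (hf : FN (m + 1) f) (hg : FN (m + 1) g) (hh : FN (m + 1) h) :
    SN (m + 1) (fun v => ∃ z, z < f v ∧ R (g v) (h v) z) := by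
  refine SN.app3 (R := fun b x y => ∃ z, z < b ∧ R x y z) ?_ hf hg hh
  refine SN.bex (TN.var (0 : Fin 3)) ?_
  exact hR.subst (fun w : Fin 4 → ℕ => ![w 1, w 2, w 3]) (fun i => by
        match i with
        | 0 => exact TN.var _
        | 1 => exact TN.var _
        | 2 => exact TN.var _)

theorem wn3 (m : ℕ) : SN (m + 1) (fun v : Fin 3 → ℕ => Wn m (v 0) (Nat.pair (v 1) (v 2))) :=
  SN.app2 (wn_sn m) (FN.var 0) (FN.pair (FN.var 1) (FN.var 2))

theorem qq_sn (m : ℕ) : SN (m + 2) (fun v : Fin 2 → ℕ => QQ m (v 0) (v 1)) := by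
  have hi : FN (m + 2) (fun v : Fin 2 → ℕ => v 0) := FN.var 0
  have hs : FN (m + 2) (fun v : Fin 2 → ℕ => v 1) := FN.var 1
  refine SN.and (SN.flt hs.right hi) (SN.and ?_ ?_)
  · exact SN.app3 (R := fun e i z => ¬ Wn m e (Nat.pair i z)) (wn3 m).neg hs.right hi hs.left
  · exact ballF (R := fun e i z => Wn m e (Nat.pair i z)) (wn3 m).up hs.left hs.right hi

theorem nqq_sn (m : ℕ) : SN (m + 2) (fun v : Fin 2 → ℕ => ¬ QQ m (v 0) (v 1)) := by
  have hi : FN (m + 2) (fun v : Fin 2 → ℕ => v 0) := FN.var 0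
  have hs : FN (m + 2) (fun v : Fin 2 → ℕ => v 1) := FN.var 1
  refine SN.congr (SN.or (SN.flt hi hs.right.succ) (SN.or
    (SN.app3 (R := fun e i z => Wn m e (Nat.pair i z)) (wn3 m).up hs.right hi hs.left)
    (bexF (R := fun e i z => ¬ Wn m e (Nat.pair i z)) (wn3 m).neg hs.left hs.right hi))) fun v => ?_
  unfold QQ
  rw [not_and_or, not_and_or, not_not, not_lt, Nat.lt_succ_iff]
  push Not
  rfl

theorem qq_inj {i s s' : ℕ} (h : QQ m i s) (h' : QQ m i s') (e : s.unpair.2 = s'.unpair.2) :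
    s = s' := by
  obtain ⟨_, h1, h2⟩ := h
  obtain ⟨_, h1', h2'⟩ := h'
  have : s.unpair.1 = s'.unpair.1 := by
    rcases Nat.lt_trichotomy s.unpair.1 s'.unpair.1 with hl | hl | hl
    · exact absurd (h2' _ hl) (e ▸ h1)
    · exact hl
    · exact absurd (h2 _ hl) (e ▸ h1')
  rw [← Nat.pair_unpair s, ← Nat.pair_unpair s', this, e]

theorem inh_named {f : ℕ → ℕ} (hf : InH (m + 1) f) : ∀ᶠ i in UU, ∃ s, QQ m i s ∧ val s = f i := by
  obtain ⟨G, hG, hu, hf⟩ := hf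
  obtain ⟨P, hP, e⟩ := hG.cases
  obtain ⟨c, hc⟩ := wn_univ m (R := fun x => P ![x.unpair.1, x.unpair.2.unpair.1,
    x.unpair.2.unpair.2]) (by
      have h0 : FN (m + 1) (fun v : Fin 1 → ℕ => v 0) := FN.var 0
      have := SN.app (k := 1) hP (f := ![fun v => (v 0).unpair.1, fun v => (v 0).unpair.2.unpair.1,
        fun v => (v 0).unpair.2.unpair.2]) (fun i => by
        match i with
        | 0 => exact h0.left
        | 1 => exact h0.right.left
        | 2 => exact h0.right.right)
      refine this.congr fun v => ?_
      refine iff_of_eq (congrArg P ?_)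
      funext i
      match i with
      | 0 => rfl
      | 1 => rfl
      | 2 => rfl)
  have key : ∀ i z, Wn m c (Nat.pair i z) ↔ P (sn ![i, z.unpair.1] z.unpair.2) := by
    intro i z
    rw [← hc, Nat.unpair_pair]
    refine iff_of_eq (congrArg P ?_)
    funext i
    match i with
    | 0 => rfl
    | 1 => rfl
    | 2 => rfl
  filter_upwards [hf, uu_gt c] with i hi hci
  have hi' : G ((![i, f i] : Fin 2 → ℕ) 0) ((![i, f i] : Fin 2 → ℕ) 1) := hi
  obtain ⟨y, hy⟩ := (e ![i, f i]).1 hi'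
  classical
  have hex : ∃ z, ¬ Wn m c (Nat.pair i z) := ⟨Nat.pair (f i) y, by
    rw [key, Nat.unpair_pair]; exact hy⟩
  refine ⟨Nat.pair (Nat.find hex) c, ⟨?_, ?_, ?_⟩, ?_⟩
  · rw [Nat.unpair_pair]; exact hci
  · rw [Nat.unpair_pair]; exact Nat.find_spec hex
  · rw [Nat.unpair_pair]
    intro z hz
    have := Nat.find_min hex hz
    rwa [not_not] at this
  · have h1 := Nat.find_spec hex
    rw [key] at h1
    have h2 : G i (Nat.find hex).unpair.1 := (e ![i, (Nat.find hex).unpair.1]).2 ⟨_, h1⟩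
    unfold val
    rw [Nat.unpair_pair]
    exact hu _ _ _ h2 hi

/-- The distinguished element. -/
def aa (n : ℕ) : Hull n := hmk _ inh_id
theorem rep_aa (n : ℕ) : ∀ᶠ i in UU, rep (aa n) i = i := rep_hmk _ _

theorem lift2 {n : ℕ} {R : ℕ → ℕ → ℕ → Prop}
    (hR : SN (n + 1) (fun v : Fin 3 → ℕ => R (v 0) (v 1) (v 2))) :
    SigmaDef2 (n + 1) (Hull n) (fun x y => ∀ᶠ i in UU, R i (rep x i) (rep y i)) := by
  refine sigmaDef_of_s ?_
  have := (lift_s (n := n) le_rfl hR).subst (fun v : Fin 2 → Hull n => ![aa n, v 0, v 1])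
    (fun i => by
      match i with
      | 0 => exact Tm.const _ _
      | 1 => exact Tm.var _ _
      | 2 => exact Tm.var _ _)
  refine this.congr fun v => Filter.eventually_congr ?_
  filter_upwards [rep_aa n] with i hi
  show _ ↔ R (rep (aa n) i) _ _
  rw [hi]
  rfl

theorem hskol1 {n : ℕ} {R : ℕ → ℕ → ℕ → Prop}
    (hR : SN (n + 1) (fun v : Fin 3 → ℕ => R (v 0) (v 1) (v 2))) (x : Hull n)
    (h : ∀ᶠ i in UU, ∃ y, R i (rep x i) y) : ∃ y : Hull n, ∀ᶠ i in UU, R i (rep x i) (rep y i) := by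
  obtain ⟨y, hy⟩ := hull_skol ![aa n, x] (R := fun u y => R (u 0) (u 1) y) hR (by
    filter_upwards [h, rep_aa n] with i hi hi'
    show ∃ y, R (rep (aa n) i) (rep x i) y
    rwa [hi'])
  refine ⟨y, ?_⟩
  filter_upwards [hy, rep_aa n] with i hi hi'
  have : R (rep (aa n) i) (rep x i) (rep y i) := hi
  rwa [hi'] at this

/-- `e` is the first name of `x`. -/
def EE (m i x e : ℕ) : Prop :=
  ∃ s, (QQ m i s ∧ val s = x) ∧ s.unpair.2 = e ∧ ∀ s', s' < s → ¬ (QQ m i s' ∧ val s' = x)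

theorem ee_sn (m : ℕ) : SN (m + 2) (fun v : Fin 3 → ℕ => EE m (v 0) (v 1) (v 2)) := by
  refine SN.ex (k := 3) (R := fun v s => (QQ m (v 0) s ∧ val s = v 1) ∧ s.unpair.2 = v 2 ∧
    ∀ s', s' < s → ¬ (QQ m (v 0) s' ∧ val s' = v 1)) ?_
  have hi : FN (m + 2) (fun v : Fin 4 → ℕ => v 0) := FN.var 0
  have hx : FN (m + 2) (fun v : Fin 4 → ℕ => v 1) := FN.var 1
  have he : FN (m + 2) (fun v : Fin 4 → ℕ => v 2) := FN.var 2
  have hs : FN (m + 2) (fun v : Fin 4 → ℕ => v 3) := FN.var 3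
  refine SN.and (SN.and (SN.app2 (qq_sn m) hi hs) (SN.feq hs.left.left hx))
    (SN.and (SN.feq hs.right he) (ballF (R := fun i x s' => ¬ (QQ m i s' ∧ val s' = x)) ?_ hs hi hx))
  have hx : FN (m + 2) (fun v : Fin 3 → ℕ => v 1) := FN.var 1
  have hs : FN (m + 2) (fun v : Fin 3 → ℕ => v 2) := FN.var 2
  refine SN.congr (SN.or (SN.app2 (R := fun i s => ¬ QQ m i s) (nqq_sn m)
    (FN.var (0 : Fin 3)) (FN.var (2 : Fin 3))) (SN.or
      (SN.flt hs.left.left hx) (SN.flt hx hs.left.left))) fun v => ?_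
  unfold val
  rw [not_and_or]
  refine or_congr Iff.rfl ?_
  exact Nat.ne_iff_lt_or_gt

theorem ee_ex {i x : ℕ} (h : ∃ s, QQ m i s ∧ val s = x) : ∃ e, EE m i x e := by
  classical
  exact ⟨_, Nat.find h, Nat.find_spec h, rfl, fun s' hs' => Nat.find_min h hs'⟩

theorem ee_lt {i x e : ℕ} (h : EE m i x e) : e < i := by
  obtain ⟨s, h1, rfl, _⟩ := h
  exact h1.1.1

theorem ee_fun {i x e e' : ℕ} (h : EE m i x e) (h' : EE m i x e') : e = e' := by
  obtain ⟨s, h1, rfl, h2⟩ := h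
  obtain ⟨s', h1', rfl, h2'⟩ := h'
  rcases Nat.lt_trichotomy s s' with hl | hl | hl
  · exact absurd h1 (h2' _ hl)
  · rw [hl]
  · exact absurd h1' (h2 _ hl)

theorem ee_inj {i x x' e : ℕ} (h : EE m i x e) (h' : EE m i x' e) : x = x' := by
  obtain ⟨s, h1, h3, h2⟩ := h
  obtain ⟨s', h1', h3', h2'⟩ := h'
  have := qq_inj h1.1 h1'.1 (h3.trans h3'.symm)
  rw [← h1.2, ← h1'.2, this]

/-- The injection of the whole hull below `aa`. -/
def FH (m : ℕ) (x e : Hull (m + 1)) : Prop := ∀ᶠ i in UU, EE m i (rep x i) (rep e i)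

theorem fh_def (m : ℕ) : SigmaDef2 (m + 2) (Hull (m + 1)) (FH m) := lift2 (ee_sn m)
theorem fh_tot (x : Hull (m + 1)) : ∃ e, e < aa (m + 1) ∧ FH m x e := by
  obtain ⟨e, he⟩ := hskol1 (ee_sn m) x ((inh_named (rep_inh x)).mono fun i hi => ee_ex hi)
  refine ⟨e, ?_, he⟩
  rw [hull_lt]
  filter_upwards [he, rep_aa (m + 1)] with i hi hi'
  rw [hi']
  exact ee_lt hi
theorem fh_fun {x e e' : Hull (m + 1)} (h : FH m x e) (h' : FH m x e') : e = e' := by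
  rw [hull_eq]
  filter_upwards [h, h'] with i hi hi'
  exact ee_fun hi hi'
theorem fh_inj {x x' e : Hull (m + 1)} (h : FH m x e) (h' : FH m x' e) : x = x' := by
  rw [hull_eq]
  filter_upwards [h, h'] with i hi hi'
  exact ee_inj hi hi'

theorem not_gphp (m : ℕ) : ¬ GPHP (Hull (m + 1)) (m + 1 + 1) := by
  intro h
  obtain ⟨y, hy⟩ := h (aa (m + 1))
  exact hy ⟨FH m, fh_def m, fun u _ => fh_tot u, fun u v v' _ => fh_fun, fun u u' v _ _ => fh_inj⟩

theorem not_fair (m : ℕ) :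
    ¬ ∀ k : Hull (m + 1), (1 : Hull (m + 1)) ≤ k → FairFRT1 (Hull (m + 1)) (m + 1 + 1) k := by
  intro h
  have hM := hull_pam (m + 1)
  obtain ⟨y, hy⟩ := h (aa (m + 1)) (by
    rw [hull_le]
    filter_upwards [rep_one (n := m + 1), rep_aa (m + 1), uu_gt 0] with i h1 h2 h3
    omega) (1 + 1)
  obtain ⟨H, ⟨_, h1, h2, h3⟩, i, hi⟩ := hy (FH m)
    ⟨fh_def m, fun u _ => fh_tot u, fun u v v' _ => fh_fun⟩
  have l1 : (1 : Hull (m + 1)) < 1 + 1 := PAm.lt_succ hM 1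
  have l0 : (0 : Hull (m + 1)) < 1 + 1 := hM.lt_trans _ _ _ hM.zero_lt_one l1
  obtain ⟨v0, _, hv0⟩ := h1 0 l0
  obtain ⟨v1, _, hv1⟩ := h1 1 l1
  have : v0 = v1 := fh_inj (hi _ _ l0 hv0) (hi _ _ l1 hv1)
  subst this
  have := h3 _ _ _ l0 l1 hv0 hv1
  exact hM.lt_irrefl 0 (by conv_rhs => rw [this]
                           exact hM.zero_lt_one)

end Names
end ArithFC

namespace ArithFC

section Lists

/-- Append the first `j` fresh elements. -/
def extL (l hs : List ℕ) (j : ℕ) : List ℕ := l ++ (hs.filter (fun x => x ∉ l)).take j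

/-- The sequence coded by `t`. -/
def seqL (i t : ℕ) : List ℕ := (List.range (3 * i + 2)).map (Nat.beta t)

/-- One step of the coloring construction. -/
def stepL (i t : ℕ) (l : List ℕ) : List ℕ := extL (extL l (seqL i t) 2) [t] 1

theorem extL_len (l hs : List ℕ) (j : ℕ) : (extL l hs j).length ≤ l.length + j := by
  unfold extL
  rw [List.length_append]
  have := List.length_take_le j (hs.filter (fun x => x ∉ l))
  omega

theorem stepL_len (i t : ℕ) (l : List ℕ) : (stepL i t l).length ≤ l.length + 3 := by
  have h1 := extL_len l (seqL i t) 2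
  have h2 := extL_len (extL l (seqL i t) 2) [t] 1
  unfold stepL
  omega

theorem stepL_pre (i t : ℕ) (l : List ℕ) : extL l (seqL i t) 2 <+: stepL i t l :=
  List.prefix_append _ _

theorem stepL_pre' (i t : ℕ) (l : List ℕ) : l <+: stepL i t l :=
  (List.prefix_append _ _).trans (stepL_pre i t l)

theorem stepL_mem (i t : ℕ) (l : List ℕ) : t ∈ stepL i t l := by
  unfold stepL
  generalize extL l (seqL i t) 2 = l'
  unfold extL
  by_cases h : t ∈ l'
  · exact List.mem_append_left _ h
  · simp [h]

theorem pre_idx {l l' : List ℕ} (h : l <+: l') {x : ℕ} (hx : x ∈ l) : l'.idxOf x = l.idxOf x := by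
  obtain ⟨r, rfl⟩ := h
  exact List.idxOf_append_of_mem hx

theorem stepL_both {i t : ℕ} {l : List ℕ} (hl : l.length ≤ 3 * i) (hn : (seqL i t).Nodup)
    (c : ℕ) (hc : c < 2) : ∃ x ∈ seqL i t, x ∈ stepL i t l ∧ (stepL i t l).idxOf x % 2 = c := by
  suffices h : ∃ x ∈ seqL i t, x ∈ extL l (seqL i t) 2 ∧ (extL l (seqL i t) 2).idxOf x % 2 = c by
    obtain ⟨x, h1, h2, h3⟩ := h
    exact ⟨x, h1, (stepL_pre i t l).subset h2, by rw [pre_idx (stepL_pre i t l) h2]; exact h3⟩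
  have hlen : 2 ≤ ((seqL i t).filter (fun x => x ∉ l)).length := by
    have h1 : ((seqL i t).filter (fun x => x ∈ l)).length ≤ l.length := by
      refine List.Nodup.length_le_of_subset (hn.filter _) fun x hx => ?_
      have := (List.mem_filter.1 hx).2
      simpa using this
    have h2 : (seqL i t).length = 3 * i + 2 := by simp [seqL]
    have h3 := List.length_eq_length_filter_add (l := seqL i t) (fun x => decide (x ∈ l))
    have h4 : (seqL i t).filter (fun x => !decide (x ∈ l)) =
        (seqL i t).filter (fun x => decide (x ∉ l)) := by
      congr 1; funext x; simp
    rw [h4] at h3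
    omega
  have hnd : ((seqL i t).filter (fun x => x ∉ l)).Nodup := hn.filter _
  have hsub : ∀ x ∈ (seqL i t).filter (fun x => x ∉ l), x ∈ seqL i t ∧ x ∉ l := by
    intro x hx
    have := List.mem_filter.1 hx
    exact ⟨this.1, by simpa using this.2⟩
  unfold extL
  generalize (seqL i t).filter (fun x => x ∉ l) = f at *
  match f, hlen, hnd, hsub with
  | x :: y :: r, _, hnd, hsub =>
    have hx := hsub x (by simp)
    have hy := hsub y (by simp)
    have hxy : x ≠ y := by
      intro h; subst h; simp at hnd
    have e1 : (l ++ [x, y]).idxOf x = l.length := by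
      rw [List.idxOf_append_of_notMem hx.2]; simp
    have e2 : (l ++ [x, y]).idxOf y = l.length + 1 := by
      rw [List.idxOf_append_of_notMem hy.2]
      simp [List.idxOf_cons, hxy]
    have e3 : (x :: y :: r).take 2 = [x, y] := rfl
    rw [e3]
    by_cases hp : l.length % 2 = c
    · exact ⟨x, hx.1, by simp, by rw [e1]; exact hp⟩
    · exact ⟨y, hy.1, by simp, by rw [e2]; omega⟩

open Classical in
/-- The list built up to stage `s`. -/
noncomputable def LL (m i : ℕ) : ℕ → List ℕ
  | 0 => []
  | s + 1 => if QQ m i s then stepL i (val s) (LL m i s) else LL m i s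

variable {m : ℕ}

theorem LL_succ {i s : ℕ} (h : QQ m i s) : LL m i (s + 1) = stepL i (val s) (LL m i s) := if_pos h

theorem LL_pre1 (i s : ℕ) : LL m i s <+: LL m i (s + 1) := by
  by_cases h : QQ m i s
  · rw [LL_succ h]; exact stepL_pre' _ _ _
  · rw [show LL m i (s + 1) = LL m i s from if_neg h]

theorem LL_pre {i s s' : ℕ} (h : s ≤ s') : LL m i s <+: LL m i s' := by
  induction s', h using Nat.le_induction with
  | base => exact List.prefix_refl _
  | succ k _ ih => exact ih.trans (LL_pre1 i k)

theorem LL_idx {i s s' x : ℕ} (h : x ∈ LL m i s) (h' : x ∈ LL m i s') :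
    (LL m i s).idxOf x = (LL m i s').idxOf x := by
  rcases le_total s s' with hl | hl
  · exact (pre_idx (LL_pre hl) h).symm
  · exact pre_idx (LL_pre hl) h'

open Classical in
theorem LL_len (i s : ℕ) : (LL m i s).length ≤ 3 * i := by
  have h1 : (LL m i s).length ≤ 3 * ((Finset.range s).filter (fun s => QQ m i s)).card := by
    induction s with
    | zero => simp [LL]
    | succ s ih =>
      rw [Finset.range_add_one, Finset.filter_insert]
      by_cases h : QQ m i s
      · rw [LL_succ h, if_pos h, Finset.card_insert_of_notMem (by simp)]
        have := stepL_len i (val s) (LL m i s)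
        omega
      · rw [show LL m i (s + 1) = LL m i s from if_neg h, if_neg h]
        exact ih
  have h2 : ((Finset.range s).filter (fun s => QQ m i s)).card ≤ (Finset.range i).card := by
    refine Finset.card_le_card_of_injOn (fun s => s.unpair.2) ?_ ?_
    · intro s hs
      have hs' := (Finset.mem_filter.1 hs).2
      simpa using hs'.1
    · intro s hs s' hs' e
      exact qq_inj (Finset.mem_filter.1 hs).2 (Finset.mem_filter.1 hs').2 e
  rw [Finset.card_range] at h2
  omega

/-- Color of an element read off from a list; 2 if undefined. -/
def colF (l : List ℕ) (x : ℕ) : ℕ := if l.idxOf x < l.length then l.idxOf x % 2 else 2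

/-- The coloring. -/
def Col (m i x c : ℕ) : Prop := ∃ s, c < 2 ∧ colF (LL m i s) x = c

theorem col_iff {i x c : ℕ} : Col m i x c ↔ ∃ s, x ∈ LL m i s ∧ (LL m i s).idxOf x % 2 = c := by
  refine exists_congr fun s => ?_
  unfold colF
  by_cases h : x ∈ LL m i s
  · rw [if_pos (List.idxOf_lt_length_iff.2 h)]
    have := Nat.mod_lt ((LL m i s).idxOf x) (Nat.zero_lt_two)
    constructor
    · exact fun h' => ⟨h, h'.2⟩
    · exact fun h' => ⟨by omega, h'.2⟩
  · rw [if_neg (fun h' => h (List.idxOf_lt_length_iff.1 h'))]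
    constructor
    · intro h'; omega
    · exact fun h' => absurd h'.1 h

theorem col_fun {i x c c' : ℕ} (h : Col m i x c) (h' : Col m i x c') : c = c' := by
  rw [col_iff] at h h'
  obtain ⟨s, h1, rfl⟩ := h
  obtain ⟨s', h1', rfl⟩ := h'
  rw [LL_idx h1 h1']

theorem col_tot {i x : ℕ} (h : ∃ s, QQ m i s ∧ val s = x) : ∃ c, Col m i x c := by
  obtain ⟨s, h, rfl⟩ := h
  refine ⟨_, col_iff.2 ⟨s + 1, ?_, rfl⟩⟩
  rw [LL_succ h]
  exact stepL_mem _ _ _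

theorem col_both {i t : ℕ} (h : ∃ s, QQ m i s ∧ val s = t) (hn : (seqL i t).Nodup) (c : ℕ)
    (hc : c < 2) : ∃ j, j < 3 * i + 2 ∧ Col m i (Nat.beta t j) c := by
  obtain ⟨s, h, rfl⟩ := h
  obtain ⟨x, h1, h2, h3⟩ := stepL_both (LL_len i s) hn c hc
  simp only [seqL, List.mem_map, List.mem_range] at h1
  obtain ⟨j, hj, rfl⟩ := h1
  rw [← LL_succ h] at h2 h3
  exact ⟨j, hj, col_iff.2 ⟨s + 1, h2, h3⟩⟩

theorem beta_prim : Primrec₂ Nat.beta := by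
  have hl : Primrec (fun p : ℕ × ℕ => p.1.unpair.1) :=
    Primrec.fst.comp (Primrec.unpair.comp Primrec.fst)
  have hr : Primrec (fun p : ℕ × ℕ => p.1.unpair.2) :=
    Primrec.snd.comp (Primrec.unpair.comp Primrec.fst)
  exact Primrec.nat_mod.comp hl (Primrec.succ.comp
    (Primrec.nat_mul.comp (Primrec.succ.comp Primrec.snd) hr))

theorem mem_prim : PrimrecRel (fun (x : ℕ) (l : List ℕ) => x ∈ l) := by
  have h := PrimrecRel.exists_mem_list (R := fun (a b : ℕ) => a = b) Primrec.eq
  have h2 := PrimrecRel.comp (α := ℕ × List ℕ) h Primrec.snd Primrec.fst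
  exact h2.of_eq fun p => by simp

theorem ext_prim (j : ℕ) : Primrec₂ (fun l hs : List ℕ => extL l hs j) := by
  have h1 : PrimrecRel (fun (x : ℕ) (l : List ℕ) => x ∉ l) := PrimrecPred.not mem_prim
  have h2 := PrimrecRel.listFilter h1
  exact Primrec.list_append.comp Primrec.fst (Primrec.list_take.comp (Primrec.const j)
    (h2.comp Primrec.snd Primrec.fst))

theorem seq_prim : Primrec₂ seqL := by
  refine Primrec.list_map (Primrec.list_range.comp ?_) ?_
  · exact Primrec.nat_add.comp (Primrec.nat_mul.comp (Primrec.const 3) Primrec.fst) (Primrec.const 2)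
  · exact beta_prim.comp (Primrec.snd.comp Primrec.fst) Primrec.snd

theorem step_prim : Primrec (fun p : (ℕ × ℕ) × List ℕ => stepL p.1.1 p.1.2 p.2) := by
  have ht : Primrec (fun p : (ℕ × ℕ) × List ℕ => p.1.2) := Primrec.snd.comp Primrec.fst
  have hi : Primrec (fun p : (ℕ × ℕ) × List ℕ => p.1.1) := Primrec.fst.comp Primrec.fst
  exact (ext_prim 1).comp ((ext_prim 2).comp Primrec.snd (seq_prim.comp hi ht))
    (Primrec.list_cons.comp ht (Primrec.const []))

theorem colF_prim : Primrec₂ colF := by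
  have h1 : Primrec (fun p : List ℕ × ℕ => p.1.idxOf p.2) :=
    Primrec.list_idxOf.comp Primrec.snd Primrec.fst
  exact Primrec.ite (Primrec.nat_lt.comp h1 (Primrec.list_length.comp Primrec.fst))
    (Primrec.nat_mod.comp h1 (Primrec.const 2)) (Primrec.const 2)

open Classical in
/-- Characteristic function of `QQ`. -/
noncomputable def chi (m i s : ℕ) : ℕ := if QQ m i s then 1 else 0

theorem chi_fn (m : ℕ) : FN (m + 2) (fun v : Fin 2 → ℕ => chi m (v 0) (v 1)) := by
  refine SN.congr (SN.or
    (SN.and (SN.app2 (R := fun i s => QQ m i s) (qq_sn m) (FN.var (0 : Fin 3)) (FN.var (1 : Fin 3)))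
      (SN.eq (TN.var (2 : Fin 3)) (TN.const 1)))
    (SN.and (SN.app2 (R := fun i s => ¬ QQ m i s) (nqq_sn m) (FN.var (0 : Fin 3)) (FN.var (1 : Fin 3)))
      (SN.eq (TN.var (2 : Fin 3)) (TN.const 0)))) fun v => ?_
  show chi m (v 0) (v 1) = v 2 ↔ _
  unfold chi
  by_cases h : QQ m (v 0) (v 1)
  · simp [h, eq_comm]
  · simp [h, eq_comm]

/-- The step function on codes. -/
def gst (c i t l : ℕ) : ℕ :=
  Encodable.encode (if c = 1 then stepL i t (Denumerable.ofNat (List ℕ) l)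
    else Denumerable.ofNat (List ℕ) l)

theorem gst_fn {m k : ℕ} {c i t l : (Fin k → ℕ) → ℕ} (hc : FN (m + 1) c) (hi : FN (m + 1) i)
    (ht : FN (m + 1) t) (hl : FN (m + 1) l) :
    FN (m + 1) (fun v => gst (c v) (i v) (t v) (l v)) := by
  have hp : Primrec₂ (fun x y : ℕ => gst x.unpair.1 x.unpair.2 y.unpair.1 y.unpair.2) := by
    have u1 : Primrec (fun p : ℕ × ℕ => p.1.unpair.1) :=
      Primrec.fst.comp (Primrec.unpair.comp Primrec.fst)
    have u2 : Primrec (fun p : ℕ × ℕ => p.1.unpair.2) :=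
      Primrec.snd.comp (Primrec.unpair.comp Primrec.fst)
    have u3 : Primrec (fun p : ℕ × ℕ => p.2.unpair.1) :=
      Primrec.fst.comp (Primrec.unpair.comp Primrec.snd)
    have u4 : Primrec (fun p : ℕ × ℕ => Denumerable.ofNat (List ℕ) p.2.unpair.2) :=
      (Primrec.ofNat _).comp (Primrec.snd.comp (Primrec.unpair.comp Primrec.snd))
    exact Primrec.encode.comp (Primrec.ite (Primrec.eq.comp u1 (Primrec.const 1))
      (step_prim.comp ((u2.pair u3).pair u4)) u4)
  have := FN.prim2 hp (FN.pair hc hi) (FN.pair ht hl)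
  simpa using this

theorem LL_code (m i s : ℕ) : Encodable.encode (LL m i s) =
    (Nat.rec 0 (fun s l => gst (chi m i s) i (val s) l) s : ℕ) := by
  induction s with
  | zero => rfl
  | succ s ih =>
    show _ = gst (chi m i s) i (val s) (Nat.rec 0 (fun s l => gst (chi m i s) i (val s) l) s : ℕ)
    rw [← ih]
    unfold gst chi
    rw [Denumerable.ofNat_encode]
    by_cases h : QQ m i s
    · simp [h, LL]
    · simp [h, LL]

theorem LL_fn (m : ℕ) : FN (m + 2) (fun v : Fin 2 → ℕ => Encodable.encode (LL m (v 0) (v 1))) := by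
  have hs : FN (m + 2) (fun v : Fin 3 → ℕ => v 1) := FN.var 1
  have := FN.iter (m := m + 1) (b := fun _ => 0)
    (g := fun i s l => gst (chi m i s) i (val s) l) (FN.const 0)
    (gst_fn (FN.app2 (chi_fn m) (FN.var 0) (FN.var 1)) (FN.var 0) hs.left.left (FN.var 2))
  simpa only [LL_code] using this

theorem col_sn (m : ℕ) : SN (m + 2) (fun v : Fin 3 → ℕ => Col m (v 0) (v 1) (v 2)) := by
  refine SN.ex (k := 3) (R := fun v s => v 2 < 2 ∧ colF (LL m (v 0) s) (v 1) = v 2) ?_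
  have hp : Primrec₂ (fun l x : ℕ => colF (Denumerable.ofNat (List ℕ) l) x) :=
    colF_prim.comp ((Primrec.ofNat _).comp Primrec.fst) Primrec.snd
  have h1 := FN.prim2 (m := m + 1) hp
    (FN.app2 (m := m + 1) (F := fun i s => Encodable.encode (LL m i s)) (LL_fn m) (FN.var (0 : Fin 4)) (FN.var (3 : Fin 4)))
    (FN.var (1 : Fin 4))
  simp only [Denumerable.ofNat_encode] at h1
  exact SN.and (SN.lt (TN.var (2 : Fin 4)) (TN.const 2)) (SN.feq h1 (FN.var (2 : Fin 4)))

end Lists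
end ArithFC

namespace ArithFC
section Final

theorem prim_three : Primrec (fun i : ℕ => 3 * i + 2) :=
  Primrec.nat_add.comp (Primrec.nat_mul.comp (Primrec.const 3) Primrec.id) (Primrec.const 2)

theorem viol_sn (m : ℕ) : SN (m + 1) (fun v : Fin 3 → ℕ =>
    (v 2).unpair.1 < (v 2).unpair.2 ∧ (v 2).unpair.2 < 3 * (v 0) + 2 ∧
      Nat.beta (v 1) (v 2).unpair.1 = Nat.beta (v 1) (v 2).unpair.2) := by
  have hi : FN (m + 1) (fun v : Fin 3 → ℕ => v 0) := FN.var 0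
  have ht : FN (m + 1) (fun v : Fin 3 → ℕ => v 1) := FN.var 1
  have hp : FN (m + 1) (fun v : Fin 3 → ℕ => v 2) := FN.var 2
  exact SN.and (SN.flt hp.left hp.right) (SN.and (SN.flt hp.right (FN.prim prim_three hi))
    (SN.feq (FN.prim2 beta_prim ht hp.left) (FN.prim2 beta_prim ht hp.right)))

theorem pick_sn (m c : ℕ) : SN (m + 2) (fun v : Fin 3 → ℕ =>
    v 2 < 3 * (v 0) + 2 ∧ Col m (v 0) (Nat.beta (v 1) (v 2)) c) := by
  have hi : FN (m + 2) (fun v : Fin 3 → ℕ => v 0) := FN.var 0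
  have ht : FN (m + 2) (fun v : Fin 3 → ℕ => v 1) := FN.var 1
  have hp : FN (m + 2) (fun v : Fin 3 → ℕ => v 2) := FN.var 2
  exact SN.and (SN.flt hp (FN.prim prim_three hi))
    (SN.app3 (R := fun i x c => Col m i x c) (col_sn m) hi (FN.prim2 (m := m + 1) beta_prim ht hp)
      (FN.const c))

theorem not_frt (m : ℕ) : ¬ FRT1 (Hull (m + 1)) (m + 1 + 1) ((1 : Hull (m + 1)) + 1) := by
  intro h
  have hX := rep_hmk (n := m + 1) _ (inh_prim prim_three inh_id)
  set X : Hull (m + 1) := hmk _ (inh_prim prim_three inh_id) with hXdef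
  obtain ⟨y, hy⟩ := h X
  obtain ⟨c, H, ⟨s, _, hs1, hs2, hs3⟩, _, i0, hi0⟩ := hy
    (fun x c => ∀ᶠ i in UU, Col m i (rep x i) (rep c i)) ⟨lift2 (col_sn m), fun x _ => by
      obtain ⟨c, hc⟩ := hskol1 (col_sn m) x ((inh_named (rep_inh x)).mono fun i hi => col_tot hi)
      refine ⟨c, ?_, hc⟩
      rw [hull_lt]
      filter_upwards [hc, rep_one (n := m + 1), rep_add (1 : Hull (m + 1)) 1] with i hi h1 h2
      rw [h2, h1]
      obtain ⟨_, h, _⟩ := hi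
      exact h, fun x c c' _ h h' => by
      rw [hull_eq]
      filter_upwards [h, h'] with i hi hi'
      exact col_fun hi hi'⟩
  have l0 : (0 : Hull (m + 1)) < X := by
    rw [hull_lt]
    filter_upwards [hX, rep_zero (n := m + 1)] with i h1 h2
    omega
  obtain ⟨_, _, A, B, hAB, _⟩ := hs1 0 l0
  have hpair : Primrec₂ Nat.pair := Primrec₂.natPair
  have ht := rep_hmk _ (inh_prim2 hpair (rep_inh A) (rep_inh B))
  set t : Hull (m + 1) := hmk _ (inh_prim2 hpair (rep_inh A) (rep_inh B)) with htdef
  have hbeta : ∀ j : Hull (m + 1), ∃ b, SeqAt s j b ∧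
      ∀ᶠ i in UU, rep b i = Nat.beta (rep t i) (rep j i) := by
    intro j
    have hb := rep_hmk _ (inh_prim2 beta_prim (rep_inh t) (rep_inh j))
    refine ⟨hmk _ (inh_prim2 beta_prim (rep_inh t) (rep_inh j)), ⟨A, B, hAB, ?_⟩, hb⟩
    set b : Hull (m + 1) := hmk _ (inh_prim2 beta_prim (rep_inh t) (rep_inh j))
    have hD : ∀ᶠ i in UU, rep ((j + 1) * B + 1) i = (rep j i + 1) * rep B i + 1 := by
      filter_upwards [rep_add ((j + 1) * B) 1, rep_mul (j + 1) B, rep_add j 1,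
        rep_one (n := m + 1)] with i h1 h2 h3 h4
      rw [h1, h2, h3, h4]
    have hbv : ∀ᶠ i in UU, rep b i = rep A i % ((rep j i + 1) * rep B i + 1) := by
      filter_upwards [hb, ht] with i h1 h2
      rw [h1, h2]
      simp [Nat.beta]
    have hdiv : Primrec₂ (fun a b : ℕ => a / b) := Primrec.nat_div
    refine ⟨?_, hmk _ (inh_prim2 hdiv (rep_inh A) (rep_inh ((j + 1) * B + 1))), ?_⟩
    · rw [hull_lt]
      filter_upwards [hD, hbv] with i h1 h2
      rw [h1, h2]
      exact Nat.mod_lt _ (Nat.succ_pos _)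
    · have hq := rep_hmk _ (inh_prim2 hdiv (rep_inh A) (rep_inh ((j + 1) * B + 1)))
      set q : Hull (m + 1) := hmk _ (inh_prim2 hdiv (rep_inh A) (rep_inh ((j + 1) * B + 1)))
      rw [hull_eq]
      filter_upwards [hD, hbv, hq, rep_add (q * ((j + 1) * B + 1)) b,
        rep_mul q ((j + 1) * B + 1)] with i h1 h2 h3 h4 h5
      rw [h4, h5, h3, h1, h2, mul_comm]
      exact (Nat.div_add_mod _ _).symm
  have hnodup : ∀ᶠ i in UU, (seqL i (rep t i)).Nodup := by
    have key : ∀ᶠ i in UU, ¬ ∃ p : ℕ, p.unpair.1 < p.unpair.2 ∧ p.unpair.2 < 3 * i + 2 ∧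
        Nat.beta (rep t i) p.unpair.1 = Nat.beta (rep t i) p.unpair.2 := by
      rw [Ultrafilter.eventually_not]
      intro hc
      obtain ⟨p, hp⟩ := hskol1 (R := fun i t p => p.unpair.1 < p.unpair.2 ∧
        p.unpair.2 < 3 * i + 2 ∧ Nat.beta t p.unpair.1 = Nat.beta t p.unpair.2)
        (viol_sn (m + 1)) t hc
      have hu1 : Primrec (fun p : ℕ => p.unpair.1) := Primrec.fst.comp Primrec.unpair
      have hu2 : Primrec (fun p : ℕ => p.unpair.2) := Primrec.snd.comp Primrec.unpair
      have hj := rep_hmk _ (inh_prim hu1 (rep_inh p))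
      have hk := rep_hmk _ (inh_prim hu2 (rep_inh p))
      set j : Hull (m + 1) := hmk _ (inh_prim hu1 (rep_inh p))
      set k : Hull (m + 1) := hmk _ (inh_prim hu2 (rep_inh p))
      obtain ⟨b, hb, hb'⟩ := hbeta j
      obtain ⟨d, hd, hd'⟩ := hbeta k
      have hlt : b < d := hs2 j k b d (by
        rw [hull_lt]
        filter_upwards [hj, hk, hp] with i h1 h2 h3
        rw [h1, h2]
        exact h3.1) (by
        rw [hull_lt]
        filter_upwards [hk, hp, hX] with i h2 h3 h4
        rw [h2, h4]
        exact h3.2.1) hb hd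
      have hbd : b = d := by
        rw [hull_eq]
        filter_upwards [hj, hk, hp, hb', hd'] with i h1 h2 h3 h4 h5
        rw [h4, h5, h1, h2]
        exact h3.2.2
      rw [hbd] at hlt
      exact (hull_pam (m + 1)).lt_irrefl _ hlt
    filter_upwards [key] with i hi
    unfold seqL
    refine List.Nodup.map_on ?_ List.nodup_range
    intro x hx y hy hxy
    rw [List.mem_range] at hx hy
    by_contra hne
    rcases Nat.lt_or_gt_of_ne hne with hl | hl
    · exact hi ⟨Nat.pair x y, by simp only [Nat.unpair_pair]; exact ⟨hl, hy, hxy⟩⟩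
    · exact hi ⟨Nat.pair y x, by simp only [Nat.unpair_pair]; exact ⟨hl, hx, hxy.symm⟩⟩
  have hcol : ∀ c, c < 2 → ∀ᶠ i in UU, rep i0 i = c := by
    intro c hc
    obtain ⟨j, hj⟩ := hskol1 (R := fun i t j => j < 3 * i + 2 ∧ Col m i (Nat.beta t j) c)
      (pick_sn m c) t (by
      filter_upwards [hnodup, inh_named (rep_inh t)] with i h1 h2
      exact col_both h2 h1 c hc)
    obtain ⟨b, hb, hb'⟩ := hbeta j
    have hbH : b ∈ H := (hs3 b).2 ⟨j, by
      rw [hull_lt]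
      filter_upwards [hj, hX] with i h1 h2
      rw [h2]
      exact h1.1, hb⟩
    filter_upwards [hi0 b hbH, hj, hb'] with i h1 h2 h3
    rw [h3] at h1
    exact col_fun h1 h2.2
  obtain ⟨i, h1, h2⟩ := ((hcol 0 (by omega)).and (hcol 1 (by omega))).exists
  omega

end Final
end ArithFC

namespace ArithFC

/-- For `n ≥ 1`, over PA⁻ + IΣn, fairFRT¹₂(Σ_{n+1}) is strictly weaker
than each of fairFRT¹(Σ_{n+1}), FRT¹₂(Σ_{n+1}) and GPHP(Σ_{n+1}): each of the three
implies fairFRT¹₂(Σ_{n+1}) over PA⁻ + IΣn (indeed PA⁻ + IΣn already proves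
fairFRT¹₂(Σ_{n+1})), while PA⁻ + IΣn (hence PA⁻ + IΣn + fairFRT¹₂(Σ_{n+1}))
proves none of the three. -/
theorem statement_9 (n : ℕ) (hn : 1 ≤ n) :
    (∀ (M : Type) (_ : lang.Structure M), PAm M → ISig n M →
      (((∀ k : M, (1 : M) ≤ k → FairFRT1 M (n + 1) k) → FairFRT1 M (n + 1) ((1 : M) + 1)) ∧
        (FRT1 M (n + 1) ((1 : M) + 1) → FairFRT1 M (n + 1) ((1 : M) + 1)) ∧
        (GPHP M (n + 1) → FairFRT1 M (n + 1) ((1 : M) + 1)) ∧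
        FairFRT1 M (n + 1) ((1 : M) + 1))) ∧
      (∃ (M : Type) (_ : lang.Structure M), PAm M ∧ ISig n M ∧
        ¬∀ k : M, (1 : M) ≤ k → FairFRT1 M (n + 1) k) ∧
      (∃ (M : Type) (_ : lang.Structure M), PAm M ∧ ISig n M ∧
        ¬FRT1 M (n + 1) ((1 : M) + 1)) ∧
      (∃ (M : Type) (_ : lang.Structure M), PAm M ∧ ISig n M ∧
        ¬GPHP M (n + 1)) := by
  obtain ⟨m, rfl⟩ : ∃ m, n = m + 1 := ⟨n - 1, by omega⟩
  refine ⟨fun M _ hM hI => ?_, ?_, ?_, ?_⟩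
  · have h := fair2 hM (isem_of_isig hI)
    exact ⟨fun _ => h, fun _ => h, fun _ => h, h⟩
  · exact ⟨Hull (m + 1), inferInstance, hull_pam _, isig_of_isem (hull_pam _) (hull_isem _),
      not_fair m⟩
  · exact ⟨Hull (m + 1), inferInstance, hull_pam _, isig_of_isem (hull_pam _) (hull_isem _),
      not_frt m⟩
  · exact ⟨Hull (m + 1), inferInstance, hull_pam _, isig_of_isem (hull_pam _) (hull_isem _),
      not_gphp m⟩

end ArithFC
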